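/- arXiv:1402.2750 — 7 statements merged into one kernel-verified Lean document; each statement's English description precedes it below -/
import Mathlib

section
/- Let n ≥ 3 be an integer, let k be an integer with 2 ≤ k ≤ n−1, let s ≥ 0 be an even integer, and let f be a harmonic homogeneous polynomial of degree s on ℝⁿ. Then for every v ∈ S^{n−1} the integral ∫_{S^{n−1}} f(u)·(1 − ⟨u,v⟩²)^{(k−n)/2} dσ(u) converges and equals (ω_{n−1}·ω_k / ω_{k−1}) · [Γ((n−1)/2)·Γ(k/2)·Γ((s+n−k)/2)·Γ((s+1)/2)] / [Γ(1/2)·Γ((n−k)/2)·Γ((s+k)/2)·Γ((s+n−1)/2)] · f(v). -/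
open MeasureTheory
open scoped RealInnerProductSpace

/-- The second partial derivative `∂²f/∂yᵢ∂yⱼ` of `f : ℝⁿ → ℝ` at `y`. -/
noncomputable def secondPartialDeriv {n : ℕ} (f : EuclideanSpace ℝ (Fin n) → ℝ) (i j : Fin n)
    (y : EuclideanSpace ℝ (Fin n)) : ℝ :=
  fderiv ℝ (fun z => fderiv ℝ f z (EuclideanSpace.single j 1)) y (EuclideanSpace.single i 1)

/-- `f : ℝⁿ → ℝ` is a harmonic polynomial, homogeneous of degree `s`: it is a polynomial
function, `f (t • y) = t ^ s * f y` for `t > 0`, and `∑ i, ∂²f/∂yᵢ² = 0`. -/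
def IsHarmonicHomogeneous (n s : ℕ) (f : EuclideanSpace ℝ (Fin n) → ℝ) : Prop :=
  (∃ p : MvPolynomial (Fin n) ℝ, ∀ y, f y = MvPolynomial.eval (fun i => y i) p) ∧
  (∀ t : ℝ, 0 < t → ∀ y, f (t • y) = t ^ s * f y) ∧
  (∀ y, ∑ i, secondPartialDeriv f i i y = 0)

/-- The spherical Lebesgue (surface area) measure on the unit sphere `S^{n-1} ⊆ ℝⁿ`. -/
noncomputable def sphereMeasure (n : ℕ) :
    Measure (Metric.sphere (0 : EuclideanSpace ℝ (Fin n)) 1) :=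
  (volume : Measure (EuclideanSpace ℝ (Fin n))).toSphere

/-- `ω m = 2 π^{m/2} / Γ(m/2)`, the surface area of the unit sphere in `ℝ^m`. -/
noncomputable def ω (m : ℝ) : ℝ := 2 * Real.pi ^ (m / 2) / Real.Gamma (m / 2)


noncomputable def pe {n : ℕ} (p : MvPolynomial (Fin n) ℝ) (y : EuclideanSpace ℝ (Fin n)) : ℝ :=
  MvPolynomial.eval (fun i => y i) p

lemma pe_hasFDerivAt {n : ℕ} (p : MvPolynomial (Fin n) ℝ) (y : EuclideanSpace ℝ (Fin n)) :
    HasFDerivAt (pe p) (∑ i, pe (MvPolynomial.pderiv i p) y •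
      (EuclideanSpace.proj i : EuclideanSpace ℝ (Fin n) →L[ℝ] ℝ)) y := by
  induction p using MvPolynomial.induction_on with
  | C a =>
    have : pe (n := n) (MvPolynomial.C a) = fun _ => a := by ext; simp [pe]
    rw [this]
    simpa [pe] using hasFDerivAt_const a y
  | add p q hp hq =>
    have : pe (p + q) = pe p + pe q := by ext; simp [pe]
    rw [this]
    refine (hp.add hq).congr_fderiv ?_
    rw [← Finset.sum_add_distrib]
    refine Finset.sum_congr rfl fun i _ => ?_
    simp [pe, add_smul]
  | mul_X p j hp =>
    have : pe (p * MvPolynomial.X j) = pe p * (fun y => (EuclideanSpace.proj j : EuclideanSpace ℝ (Fin n) →L[ℝ] ℝ) y) := by ext; simp [pe]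
    rw [this]
    have h2 := (EuclideanSpace.proj j : EuclideanSpace ℝ (Fin n) →L[ℝ] ℝ).hasFDerivAt (x := y)
    refine (hp.mul h2).congr_fderiv ?_
    have e : ∀ i, pe (MvPolynomial.pderiv i (p * MvPolynomial.X j)) y =
        y j * pe (MvPolynomial.pderiv i p) y + (if i = j then pe p y else 0) := by
      intro i
      by_cases h : i = j
      · subst h; simp [pe]; ring
      · simp [pe, MvPolynomial.pderiv_X_of_ne (Ne.symm h), h]
    simp only [e, add_smul, Finset.sum_add_distrib, ite_smul, zero_smul, Finset.sum_ite_eq',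
      Finset.mem_univ, if_true, mul_smul, ← Finset.smul_sum]
    rw [add_comm]; rfl

lemma pe_continuous {n : ℕ} (p : MvPolynomial (Fin n) ℝ) : Continuous (pe p) :=
  continuous_iff_continuousAt.2 fun y => (pe_hasFDerivAt p y).continuousAt

lemma coord_le {n : ℕ} (y : EuclideanSpace ℝ (Fin n)) (i : Fin n) : |y i| ≤ ‖y‖ := by
  simpa using PiLp.norm_apply_le y i

lemma abs_le_exp {δ : ℝ} (hδ : 0 < δ) (t : ℝ) : |t| ≤ (1 / δ + 1) * Real.exp (δ * t ^ 2) := by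
  have h1 := Real.add_one_le_exp (δ * t ^ 2)
  have h2 : |t| ≤ t ^ 2 + 1 := by
    rcases abs_cases t with ⟨h, _⟩ | ⟨h, _⟩ <;> rw [h] <;> nlinarith [sq_nonneg (t-1), sq_nonneg (t+1)]
  have h3 : t ^ 2 + 1 ≤ (1 / δ + 1) * (δ * t ^ 2 + 1) := by
    have : (1 / δ + 1) * (δ * t ^ 2 + 1) = t ^ 2 + 1 + (1/δ + δ * t ^ 2) := by field_simp; ring
    rw [this]
    have : 0 ≤ 1/δ + δ * t ^ 2 := by positivity
    linarith
  have h4 : (1 / δ + 1) * (δ * t ^ 2 + 1) ≤ (1 / δ + 1) * Real.exp (δ * t ^ 2) := by gcongr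
  linarith

lemma coord_exp {n : ℕ} {δ : ℝ} (hδ : 0 < δ) (y : EuclideanSpace ℝ (Fin n)) (i : Fin n) :
    |y i| ≤ (1 / δ + 1) * Real.exp (δ * ‖y‖ ^ 2) := by
  refine (coord_le y i).trans ?_
  simpa using abs_le_exp hδ ‖y‖

lemma pe_growth {n : ℕ} (p : MvPolynomial (Fin n) ℝ) : ∀ ε > 0, ∃ C, 0 ≤ C ∧
    ∀ y, |pe p y| ≤ C * Real.exp (ε * ‖y‖ ^ 2) := by
  induction p using MvPolynomial.induction_on with
  | C a =>
    intro ε hε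
    refine ⟨|a|, abs_nonneg _, fun y => ?_⟩
    have : 1 ≤ Real.exp (ε * ‖y‖ ^ 2) := Real.one_le_exp (by positivity)
    simp only [pe, MvPolynomial.eval_C]
    nlinarith [abs_nonneg a]
  | add p q hp hq =>
    intro ε hε
    obtain ⟨C, hC, h⟩ := hp ε hε
    obtain ⟨D, hD, h'⟩ := hq ε hε
    refine ⟨C + D, by positivity, fun y => ?_⟩
    have : pe (p + q) y = pe p y + pe q y := by simp [pe]
    rw [this, add_mul]
    exact (abs_add_le _ _).trans (add_le_add (h y) (h' y))
  | mul_X p j hp =>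
    intro ε hε
    obtain ⟨C, hC, h⟩ := hp (ε/2) (by positivity)
    refine ⟨C * (1 / (ε/2) + 1), by positivity, fun y => ?_⟩
    have : pe (p * MvPolynomial.X j) y = pe p y * y j := by simp [pe]
    rw [this, abs_mul]
    calc _ ≤ (C * Real.exp (ε/2 * ‖y‖ ^ 2)) * ((1 / (ε/2) + 1) * Real.exp (ε/2 * ‖y‖ ^ 2)) := by
          gcongr
          · exact h y
          · exact coord_exp (by positivity) y j
      _ = _ := by
          rw [show ε * ‖y‖ ^ 2 = ε/2 * ‖y‖ ^ 2 + ε/2 * ‖y‖ ^ 2 by ring, Real.exp_add]; ring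

lemma gauss_integrable {n : ℕ} {c : ℝ} (hc : 0 < c) :
    Integrable (fun y : EuclideanSpace ℝ (Fin n) => Real.exp (-c * ‖y‖ ^ 2)) := by
  by_contra h
  have h1 := GaussianFourier.integral_rexp_neg_mul_sq_norm (V := EuclideanSpace ℝ (Fin n)) hc
  rw [integral_undef h] at h1
  have : 0 < (Real.pi / c) ^ (Module.finrank ℝ (EuclideanSpace ℝ (Fin n)) / 2 : ℝ) := by positivity
  linarith

/-- uniform growth along dilations -/
lemma pe_growth_affine {n : ℕ} (p : MvPolynomial (Fin n) ℝ) (a : EuclideanSpace ℝ (Fin n))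
    {ε : ℝ} (hε : 0 < ε) : ∃ C, 0 ≤ C ∧ ∀ b : ℝ, |b| ≤ 2 → ∀ y,
      |pe p (a + b • y)| ≤ C * Real.exp (ε * ‖y‖ ^ 2) := by
  obtain ⟨C, hC, h⟩ := pe_growth p (ε/8) (by positivity)
  refine ⟨C * Real.exp (ε/4 * ‖a‖^2), by positivity, fun b hb y => (h _).trans ?_⟩
  rw [mul_assoc, ← Real.exp_add]
  gcongr
  have h1 : ‖a + b • y‖ ≤ ‖a‖ + 2 * ‖y‖ := by
    refine (norm_add_le _ _).trans ?_
    rw [norm_smul, Real.norm_eq_abs]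
    gcongr
  have h2 : ‖a + b • y‖ ^ 2 ≤ (‖a‖ + 2 * ‖y‖) ^ 2 := by gcongr
  have h3 : (‖a‖ + 2 * ‖y‖) ^ 2 ≤ 2 * ‖a‖^2 + 8 * ‖y‖^2 := by nlinarith [sq_nonneg (‖a‖ - 2 * ‖y‖)]
  nlinarith

lemma integrable_of_growth {n : ℕ} {g : EuclideanSpace ℝ (Fin n) → ℝ} (hg : Continuous g) {c C : ℝ}
    (hc : 0 < c) (h : ∀ y, |g y| ≤ C * Real.exp (c/2 * ‖y‖ ^ 2)) :
    Integrable (fun y => g y * Real.exp (-c * ‖y‖ ^ 2)) := by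
  refine ((gauss_integrable (n := n) (half_pos hc)).const_mul C).mono' (by fun_prop) (.of_forall fun y => ?_)
  rw [norm_mul, Real.norm_eq_abs, Real.norm_eq_abs, Real.abs_exp]
  calc _ ≤ C * Real.exp (c/2 * ‖y‖ ^ 2) * Real.exp (-c * ‖y‖ ^ 2) := by gcongr; exact h y
    _ = _ := by rw [mul_assoc, ← Real.exp_add]; congr 2; ring

/-- Gaussian integration by parts. -/
lemma gauss_ibp {n : ℕ} (p : MvPolynomial (Fin n) ℝ) (a : EuclideanSpace ℝ (Fin n)) {b c : ℝ}
    (hb : |b| ≤ 2) (hc : 0 < c) (i : Fin n) :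
    ∫ y, pe p (a + b • y) * y i * Real.exp (-c * ‖y‖ ^ 2) =
      (b / (2 * c)) * ∫ y, pe (MvPolynomial.pderiv i p) (a + b • y) * Real.exp (-c * ‖y‖ ^ 2) := by
  have hA : ∀ y : EuclideanSpace ℝ (Fin n), HasFDerivAt (fun y => Real.exp (-c * ‖y‖ ^ 2))
      (Real.exp (-c * ‖y‖ ^ 2) • ((-c) • (2 • innerSL ℝ y))) y := by
    intro y
    have := ((hasStrictFDerivAt_norm_sq y).hasFDerivAt.const_mul (-c)).exp
    simpa using this
  have hB : ∀ y : EuclideanSpace ℝ (Fin n), HasFDerivAt (fun y => pe p (a + b • y))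
      ((∑ i, pe (MvPolynomial.pderiv i p) (a + b • y) •
      (EuclideanSpace.proj i : EuclideanSpace ℝ (Fin n) →L[ℝ] ℝ)).comp
        (b • ContinuousLinearMap.id ℝ (EuclideanSpace ℝ (Fin n)))) y := by
    intro y
    have h1 : HasFDerivAt (fun y : EuclideanSpace ℝ (Fin n) => a + b • y)
      (b • ContinuousLinearMap.id ℝ (EuclideanSpace ℝ (Fin n))) y :=
      ((hasFDerivAt_id y).const_smul b).const_add a
    exact (pe_hasFDerivAt p (a + b • y)).comp y h1
  obtain ⟨C1, hC1, h1⟩ := pe_growth_affine p a (ε := c/4) (by positivity)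
  obtain ⟨C2, hC2, h2⟩ := pe_growth_affine (MvPolynomial.pderiv i p) a (ε := c/2) (by positivity)
  obtain ⟨C3, hC3, h3⟩ := pe_growth_affine p a (ε := c/2) (by positivity)
  have cp := pe_continuous p
  have cp' := pe_continuous (MvPolynomial.pderiv i p)
  have i1 : Integrable (fun y => pe p (a + b • y) * y i * Real.exp (-c * ‖y‖ ^ 2)) := by
    apply integrable_of_growth (C := C1 * (1 / (c/4) + 1)) (by fun_prop) hc
    intro y
    rw [abs_mul]
    calc _ ≤ (C1 * Real.exp (c/4 * ‖y‖ ^ 2)) * ((1 / (c/4) + 1) * Real.exp (c/4 * ‖y‖ ^ 2)) := by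
          gcongr
          · exact h1 b hb y
          · exact coord_exp (by positivity) y i
      _ = _ := by
          rw [show c/2 * ‖y‖ ^ 2 = c/4 * ‖y‖ ^ 2 + c/4 * ‖y‖ ^ 2 by ring, Real.exp_add]; ring
  have i2 : Integrable (fun y => pe (MvPolynomial.pderiv i p) (a + b • y) * Real.exp (-c * ‖y‖ ^ 2)) :=
    integrable_of_growth (by fun_prop) hc (h2 b hb)
  have i3 : Integrable (fun y => pe p (a + b • y) * Real.exp (-c * ‖y‖ ^ 2)) :=
    integrable_of_growth (by fun_prop) hc (h3 b hb)
  have eA : ∀ y, fderiv ℝ (fun y : EuclideanSpace ℝ (Fin n) => Real.exp (-c * ‖y‖ ^ 2)) y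
      (EuclideanSpace.single i 1) = -(2 * c) * (y i * Real.exp (-c * ‖y‖ ^ 2)) := by
    intro y
    rw [(hA y).fderiv]
    simp [EuclideanSpace.inner_single_right]
    ring
  have eB : ∀ y, fderiv ℝ (fun y : EuclideanSpace ℝ (Fin n) => pe p (a + b • y)) y
      (EuclideanSpace.single i 1) = b * pe (MvPolynomial.pderiv i p) (a + b • y) := by
    intro y
    rw [(hB y).fderiv]
    simp
  have key := integral_mul_fderiv_eq_neg_fderiv_mul_of_integrable
    (f := fun y : EuclideanSpace ℝ (Fin n) => pe p (a + b • y))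
    (g := fun y : EuclideanSpace ℝ (Fin n) => Real.exp (-c * ‖y‖ ^ 2))
    (v := EuclideanSpace.single i 1) (μ := volume)
    (by simp only [eB]; simpa [mul_assoc] using i2.const_mul b)
    (by simp only [eA]; convert i1.const_mul (-(2*c)) using 2; ring)
    i3 (fun x _ => (hB x).differentiableAt) (fun x _ => (hA x).differentiableAt)
  simp only [eA, eB] at key
  have e1 : ∀ y : EuclideanSpace ℝ (Fin n), pe p (a + b • y) * (-(2 * c) * (y i * Real.exp (-c * ‖y‖ ^ 2)))
    = (-(2 * c)) * (pe p (a + b • y) * y i * Real.exp (-c * ‖y‖ ^ 2)) := fun y => by ring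
  have e2 : ∀ y : EuclideanSpace ℝ (Fin n), b * pe (MvPolynomial.pderiv i p) (a + b • y) * Real.exp (-c * ‖y‖ ^ 2)
    = b * (pe (MvPolynomial.pderiv i p) (a + b • y) * Real.exp (-c * ‖y‖ ^ 2)) := fun y => by ring
  simp only [e1, e2, integral_const_mul] at key
  rw [div_mul_eq_mul_div, eq_div_iff (by positivity)]
  linarith

/-- Gaussian mean value property. -/
lemma gauss_mean {n : ℕ} (p : MvPolynomial (Fin n) ℝ)
    (hp : ∀ y, ∑ i, pe (MvPolynomial.pderiv i (MvPolynomial.pderiv i p)) y = 0)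
    (a : EuclideanSpace ℝ (Fin n)) {c : ℝ} (hc : 0 < c) :
    ∫ y, pe p (a + y) * Real.exp (-c * ‖y‖ ^ 2) = (Real.pi / c) ^ ((n : ℝ) / 2) * pe p a := by
  set F : ℝ → EuclideanSpace ℝ (Fin n) → ℝ := fun b y => pe p (a + b • y) * Real.exp (-c * ‖y‖ ^ 2)
  set F' : ℝ → EuclideanSpace ℝ (Fin n) → ℝ := fun b y =>
    ∑ i, pe (MvPolynomial.pderiv i p) (a + b • y) * y i * Real.exp (-c * ‖y‖ ^ 2)
  have cp := pe_continuous p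
  have cp' := fun i => pe_continuous (MvPolynomial.pderiv i p)
  obtain ⟨C3, hC3, h3⟩ := pe_growth_affine p a (ε := c/2) (by positivity)
  choose C hC h1 using fun i => pe_growth_affine (MvPolynomial.pderiv i p) a (ε := c/4) (by positivity)
  have bd : ∀ i y, ∀ b : ℝ, |b| ≤ 2 → |pe (MvPolynomial.pderiv i p) (a + b • y) * y i| ≤
      (C i * (1 / (c/4) + 1)) * Real.exp (c/2 * ‖y‖^2) := by
    intro i y b hb
    rw [abs_mul]
    calc _ ≤ (C i * Real.exp (c/4 * ‖y‖ ^ 2)) * ((1 / (c/4) + 1) * Real.exp (c/4 * ‖y‖ ^ 2)) := by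
          gcongr
          · exact mul_nonneg (hC i) (Real.exp_nonneg _)
          · exact h1 i b hb y
          · exact coord_exp (by positivity) y i
      _ = _ := by
          rw [show c/2 * ‖y‖ ^ 2 = c/4 * ‖y‖ ^ 2 + c/4 * ‖y‖ ^ 2 by ring, Real.exp_add]; ring
  have hder : ∀ b ∈ Set.Ioo (-2:ℝ) 2, HasDerivAt (fun b => ∫ y, F b y) 0 b := by
    intro b hb
    have hb2 : |b| ≤ 2 := abs_le.2 ⟨hb.1.le, hb.2.le⟩
    have key := hasDerivAt_integral_of_dominated_loc_of_deriv_le (F := F) (F' := F') (μ := volume)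
      (bound := fun y => ∑ i, (C i * (1 / (c/4) + 1)) * Real.exp (-(c/2) * ‖y‖^2))
      (x₀ := b) (s := Set.Ioo (-2:ℝ) 2) (Ioo_mem_nhds hb.1 hb.2)
      (.of_forall fun b => by simp only [F]; fun_prop)
      (integrable_of_growth (by fun_prop) hc (h3 b hb2))
      (by simp only [F']; fun_prop)
      (.of_forall fun y b hb => by
        have hb2 : |b| ≤ 2 := abs_le.2 ⟨hb.1.le, hb.2.le⟩
        refine (norm_sum_le _ _).trans (Finset.sum_le_sum fun i _ => ?_)
        rw [norm_mul, Real.norm_eq_abs, Real.norm_eq_abs, Real.abs_exp]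
        calc _ ≤ (C i * (1 / (c/4) + 1)) * Real.exp (c/2 * ‖y‖^2) * Real.exp (-c * ‖y‖ ^ 2) := by
              gcongr; exact bd i y b hb2
          _ = _ := by rw [mul_assoc, ← Real.exp_add]; congr 2; ring)
      (integrable_finsetSum _ fun i _ => (gauss_integrable (by positivity)).const_mul _)
      (.of_forall fun y b _ => by
        have h1 : HasDerivAt (fun b : ℝ => a + b • y) y b := by
          simpa using ((hasDerivAt_id b).smul_const y).const_add a
        have := ((pe_hasFDerivAt p (a + b • y)).comp_hasDerivAt b h1).mul_const (Real.exp (-c * ‖y‖ ^ 2))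
        refine this.congr_deriv ?_
        simp [F', Finset.sum_mul])
    refine key.2.congr_deriv ?_
    simp only [F']
    rw [integral_finsetSum]
    · simp only [gauss_ibp _ a hb2 hc]
      rw [← Finset.mul_sum, ← integral_finsetSum]
      · simp only [← Finset.sum_mul, hp]
        simp
      · intro i _
        obtain ⟨D, hD, h⟩ := pe_growth_affine (MvPolynomial.pderiv i (MvPolynomial.pderiv i p)) a (ε := c/2) (by positivity)
        have := pe_continuous (MvPolynomial.pderiv i (MvPolynomial.pderiv i p))
        exact integrable_of_growth (by fun_prop) hc (h b hb2)
    · intro i _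
      exact integrable_of_growth (by fun_prop) hc (fun y => bd i y b hb2)
  have hconst : (∫ y, F 1 y) = ∫ y, F 0 y := by
    refine (convex_Ioo (-2:ℝ) 2).is_const_of_fderivWithin_eq_zero (𝕜 := ℝ) (f := fun b => ∫ y, F b y) (fun b hb => (hder b hb).differentiableAt.differentiableWithinAt) ?_ (by constructor <;> norm_num) (by constructor <;> norm_num)
    intro b hb
    have := (hder b hb).hasFDerivAt.hasFDerivWithinAt (s := Set.Ioo (-2:ℝ) 2)
    rw [this.fderivWithin (isOpen_Ioo.uniqueDiffWithinAt hb)]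
    ext; simp
  simp only [F, one_smul, zero_smul, add_zero, integral_const_mul] at hconst
  rw [hconst, GaussianFourier.integral_rexp_neg_mul_sq_norm hc]
  simp [mul_comm]

lemma pe_harmonic {n : ℕ} {f : EuclideanSpace ℝ (Fin n) → ℝ} {p : MvPolynomial (Fin n) ℝ}
    (hp : ∀ y, f y = MvPolynomial.eval (fun i => y i) p)
    (hf : ∀ y, ∑ i, secondPartialDeriv f i i y = 0) (y) :
    ∑ i, pe (MvPolynomial.pderiv i (MvPolynomial.pderiv i p)) y = 0 := by
  have : f = pe p := funext hp
  subst this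
  rw [← hf y]
  refine Finset.sum_congr rfl fun i _ => ?_
  unfold secondPartialDeriv
  have h : ∀ q : MvPolynomial (Fin n) ℝ, (fun z => fderiv ℝ (pe q) z (EuclideanSpace.single i 1)) = pe (MvPolynomial.pderiv i q) := by
    intro q; ext z
    rw [(pe_hasFDerivAt q z).fderiv]
    simp
  rw [h, congrFun (h _) y]

lemma pe_homog {n s : ℕ} {p : MvPolynomial (Fin n) ℝ}
    (h : ∀ t : ℝ, 0 < t → ∀ y, pe p (t • y) = t ^ s * pe p y) (t : ℝ) (y) :
    pe p (t • y) = t ^ s * pe p y := by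
  obtain ⟨q, hq⟩ : ∃ q : Polynomial ℝ, ∀ t : ℝ, q.eval t = pe p (t • y) := by
    clear h
    induction p using MvPolynomial.induction_on with
    | C a => exact ⟨Polynomial.C a, fun t => by simp [pe]⟩
    | add p q hp hq =>
      obtain ⟨P, hP⟩ := hp
      obtain ⟨Q, hQ⟩ := hq
      exact ⟨P + Q, fun t => by rw [Polynomial.eval_add, hP, hQ]; simp [pe]⟩
    | mul_X p j hp =>
      obtain ⟨P, hP⟩ := hp
      exact ⟨P * (Polynomial.C (y j) * Polynomial.X), fun t => by
        have e : pe (p * MvPolynomial.X j) (t • y) = pe p (t • y) * (t * y j) := by simp [pe]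
        rw [Polynomial.eval_mul, hP, e, Polynomial.eval_mul, Polynomial.eval_C, Polynomial.eval_X,
          mul_comm t]⟩
  have : q = Polynomial.C (pe p y) * Polynomial.X ^ s := by
    apply Polynomial.eq_of_infinite_eval_eq
    refine (Set.Ioi_infinite (0:ℝ)).mono fun t ht => ?_
    simp only [Set.mem_ofPred_eq, hq, h t ht, Polynomial.eval_mul, Polynomial.eval_C,
      Polynomial.eval_pow, Polynomial.eval_X]
    ring
  rw [← hq, this]
  simp only [Polynomial.eval_mul, Polynomial.eval_C, Polynomial.eval_pow, Polynomial.eval_X]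
  ring

lemma gamma_intOn {a r : ℝ} (ha : 0 < a) (hr : 0 < r) :
    IntegrableOn (fun t : ℝ => t ^ (a - 1) * Real.exp (-(r * t))) (Set.Ioi 0) := by
  have := integrableOn_rpow_mul_exp_neg_mul_rpow (p := 1) (s := a - 1) (b := r) (by linarith) one_pos hr
  simpa using this

lemma beta_aux {p q c : ℝ} (hp : 0 < p) (hq : 0 < q) (hc : 0 < c) :
    IntegrableOn (fun l : ℝ => l ^ (p - 1) * (c + l) ^ (-(p + q))) (Set.Ioi 0) ∧
    ∫ l in Set.Ioi (0:ℝ), l ^ (p - 1) * (c + l) ^ (-(p + q)) =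
      Real.Gamma p * Real.Gamma q / Real.Gamma (p + q) * c ^ (-q) := by
  set G : ℝ → ℝ → ℝ := fun w l => w ^ (p + q - 1) * Real.exp (-(c * w)) * (l ^ (p - 1) * Real.exp (-(w * l)))
  set μ : Measure ℝ := volume.restrict (Set.Ioi 0)
  have hG : ∀ w ∈ Set.Ioi (0:ℝ), ∫ l, G w l ∂μ = Real.Gamma p * (w ^ (q - 1) * Real.exp (-(c * w))) := by
    intro w hw
    have hw' : 0 < w := hw
    simp only [G, μ]
    rw [integral_const_mul, Real.integral_rpow_mul_exp_neg_mul_Ioi hp hw]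
    rw [one_div, Real.inv_rpow hw'.le, ← Real.rpow_neg hw'.le]
    rw [show q - 1 = (p + q - 1) + (-p) by ring, Real.rpow_add hw']
    ring
  have hG' : ∀ l ∈ Set.Ioi (0:ℝ), ∫ w, G w l ∂μ = Real.Gamma (p + q) * (l ^ (p - 1) * (c + l) ^ (-(p + q))) := by
    intro l hl
    have hl' : 0 < l := hl
    have e : ∀ w, G w l = l ^ (p - 1) * (w ^ (p + q - 1) * Real.exp (-((c + l) * w))) := by
      intro w
      simp only [G]
      rw [show -((c + l) * w) = -(c * w) + -(w * l) by ring, Real.exp_add]; ring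
    simp only [e, μ]
    rw [integral_const_mul, Real.integral_rpow_mul_exp_neg_mul_Ioi (by positivity) (by positivity)]
    rw [one_div, Real.inv_rpow (by positivity), ← Real.rpow_neg (by positivity)]
    ring
  have hI : Integrable (Function.uncurry G) (μ.prod μ) := by
    rw [integrable_prod_iff]
    · constructor
      · filter_upwards [ae_restrict_mem measurableSet_Ioi] with w hw
        exact (gamma_intOn hp hw).const_mul (w ^ (p + q - 1) * Real.exp (-(c * w)))
      · refine ((gamma_intOn hq hc).const_mul (Real.Gamma p)).congr ?_
        filter_upwards [ae_restrict_mem measurableSet_Ioi] with w hw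
        rw [← hG w hw]
        refine integral_congr_ae ?_
        filter_upwards [ae_restrict_mem measurableSet_Ioi] with l hl
        have hw' : 0 < w := hw
        have hl' : 0 < l := hl
        simp only [Function.uncurry, G]
        rw [Real.norm_of_nonneg (by positivity)]
    · apply Measurable.aestronglyMeasurable
      simp only [Function.uncurry_def, G]
      fun_prop
  have hΓ := Real.Gamma_pos_of_pos (show 0 < p + q by positivity)
  constructor
  · have := hI.integral_prod_right
    have h2 : Integrable (fun l : ℝ => Real.Gamma (p + q) * (l ^ (p - 1) * (c + l) ^ (-(p + q)))) μ := by
      refine this.congr ?_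
      filter_upwards [ae_restrict_mem measurableSet_Ioi] with l hl
      exact hG' l hl
    have h3 := h2.const_mul (Real.Gamma (p + q))⁻¹
    refine h3.congr (.of_forall fun l => ?_)
    simp only
    rw [← mul_assoc, inv_mul_cancel₀ hΓ.ne', one_mul]
  · have := integral_integral_swap hI
    rw [setIntegral_congr_fun measurableSet_Ioi hG, setIntegral_congr_fun measurableSet_Ioi hG',
      integral_const_mul, integral_const_mul, Real.integral_rpow_mul_exp_neg_mul_Ioi hq hc,
      one_div, Real.inv_rpow hc.le, ← Real.rpow_neg hc.le] at this
    field_simp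
    linarith

lemma even_moment {s : ℕ} (hs : Even s) {b : ℝ} (hb : 0 < b) :
    ∫ z : ℝ, z ^ s * Real.exp (-b * z ^ 2) =
      Real.Gamma (((s:ℝ) + 1) / 2) * b ^ (-((s:ℝ) + 1) / 2) := by
  have h := integral_comp_abs (f := fun z : ℝ => z ^ s * Real.exp (-b * z ^ 2))
  simp only [hs.pow_abs, sq_abs] at h
  rw [h]
  have h2 := integral_rpow_mul_exp_neg_mul_rpow (p := 2) (q := s) (b := b) two_pos
    (by have : (0:ℝ) ≤ s := Nat.cast_nonneg s
        linarith) hb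
  simp only [Real.rpow_natCast, Real.rpow_ofNat] at h2
  rw [h2]; ring

lemma gauss_shift (r t : ℝ) : ∫ z : ℝ, Real.exp (-(z - r * t) ^ 2) = Real.sqrt Real.pi := by
  rw [integral_sub_right_eq_self (fun z : ℝ => Real.exp (-z ^ 2)) (r * t)]
  simpa using integral_gaussian 1

lemma gauss_shift_int (r t : ℝ) : Integrable (fun z : ℝ => Real.exp (-(z - r * t) ^ 2)) := by
  have : Integrable (fun z : ℝ => Real.exp (-z ^ 2)) := by
    simpa using integrable_exp_neg_mul_sq (b := 1) one_pos
  exact this.comp_sub_right (r * t)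

lemma inner_sq_le {n : ℕ} {v : EuclideanSpace ℝ (Fin n)} (hv : ‖v‖ = 1) (x : EuclideanSpace ℝ (Fin n)) :
    ⟪x, v⟫ ^ 2 ≤ ‖x‖ ^ 2 := by
  have := abs_real_inner_le_norm x v
  rw [hv, mul_one] at this
  rw [← sq_abs]
  gcongr

lemma aniso_int {n : ℕ} (p : MvPolynomial (Fin n) ℝ) {v : EuclideanSpace ℝ (Fin n)} (hv : ‖v‖ = 1)
    {c l : ℝ} (hc : 0 < c) (hl : 0 ≤ l) :
    Integrable (fun x => pe p x * Real.exp (-(c + l) * ‖x‖ ^ 2 + l * ⟪x, v⟫ ^ 2)) := by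
  have cp := pe_continuous p
  obtain ⟨C, hC, h⟩ := pe_growth p (c/2) (by positivity)
  have := integrable_of_growth cp hc h
  refine this.mono (by fun_prop) (.of_forall fun x => ?_)
  rw [norm_mul, norm_mul]
  gcongr
  rw [Real.norm_eq_abs, Real.norm_eq_abs, Real.abs_exp, Real.abs_exp]
  gcongr
  have := inner_sq_le hv x
  nlinarith

lemma aniso_gauss {n s : ℕ} (hs : Even s) (p : MvPolynomial (Fin n) ℝ)
    (hp : ∀ y, ∑ i, pe (MvPolynomial.pderiv i (MvPolynomial.pderiv i p)) y = 0)
    (hh : ∀ (t : ℝ) y, pe p (t • y) = t ^ s * pe p y)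
    {v : EuclideanSpace ℝ (Fin n)} (hv : ‖v‖ = 1)
    {c l : ℝ} (hc : 0 < c) (hl : 0 < l) :
    ∫ x, pe p x * Real.exp (-(c + l) * ‖x‖ ^ 2 + l * ⟪x, v⟫ ^ 2) =
      Real.pi ^ (((n:ℝ) - 1) / 2) * pe p v * Real.Gamma (((s:ℝ) + 1) / 2) * c ^ (-((s:ℝ) + 1) / 2) *
        (l ^ ((s:ℝ) / 2) * (c + l) ^ (-(((n:ℝ) - 1) / 2 + (s:ℝ) / 2))) := by
  have cp := pe_continuous p
  set r := Real.sqrt l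
  have hr : r ^ 2 = l := Real.sq_sqrt hl.le
  have hr0 : 0 < r := Real.sqrt_pos.2 hl
  have hcl : 0 < c + l := by positivity
  set H : EuclideanSpace ℝ (Fin n) → ℝ → ℝ := fun x z =>
    pe p x * Real.exp (-(c + l) * ‖x‖ ^ 2 + l * ⟪x, v⟫ ^ 2) * Real.exp (-(z - r * ⟪x, v⟫) ^ 2)
  have hH : Integrable (Function.uncurry H) ((volume : Measure (EuclideanSpace ℝ (Fin n))).prod (volume : Measure ℝ)) := by
    rw [integrable_prod_iff]
    · constructor
      · exact .of_forall fun x => (gauss_shift_int r ⟪x, v⟫).const_mul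
          (pe p x * Real.exp (-(c + l) * ‖x‖ ^ 2 + l * ⟪x, v⟫ ^ 2))
      · refine ((aniso_int p hv hc hl.le).norm.mul_const (Real.sqrt Real.pi)).congr (.of_forall fun x => ?_)
        simp only [Function.uncurry, H, norm_mul (_ * _) _]
        rw [integral_const_mul]
        simp only [Real.norm_eq_abs (Real.exp _), Real.abs_exp, gauss_shift]
    · apply Continuous.aestronglyMeasurable
      simp only [Function.uncurry_def, H]
      fun_prop
  have h1 : ∀ x, ∫ z, H x z = pe p x * Real.exp (-(c + l) * ‖x‖ ^ 2 + l * ⟪x, v⟫ ^ 2) * Real.sqrt Real.pi := by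
    intro x
    simp only [H]
    rw [integral_const_mul, gauss_shift]
  have h2 : ∀ z, ∫ x, H x z = (Real.pi / (c + l)) ^ ((n:ℝ)/2) * (r / (c + l)) ^ s * pe p v *
      (z ^ s * Real.exp (-(c / (c + l)) * z ^ 2)) := by
    intro z
    set a : EuclideanSpace ℝ (Fin n) := (z * r / (c + l)) • v
    have e : ∀ x, H (a + x) z = Real.exp (-(c / (c + l)) * z ^ 2) * (pe p (a + x) * Real.exp (-(c + l) * ‖x‖ ^ 2)) := by
      intro x
      simp only [H]
      rw [mul_assoc, ← Real.exp_add, mul_left_comm, ← Real.exp_add]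
      congr 2
      have e1 : ‖a + x‖ ^ 2 = (z * r / (c + l)) ^ 2 + 2 * (z * r / (c + l)) * ⟪x, v⟫ + ‖x‖ ^ 2 := by
        rw [norm_add_sq_real]
        simp only [a]
        rw [norm_smul, hv, inner_smul_left, real_inner_comm, mul_one, Real.norm_eq_abs, sq_abs]
        simp; ring
      have e2 : ⟪a + x, v⟫ = z * r / (c + l) + ⟪x, v⟫ := by
        rw [inner_add_left]
        simp only [a]
        rw [inner_smul_left, real_inner_self_eq_norm_sq, hv]; simp
      rw [e1, e2]
      generalize ⟪x, v⟫ = t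
      generalize ‖x‖ ^ 2 = X
      rw [← hr] at hcl ⊢
      field_simp
      ring
    rw [← integral_add_left_eq_self (fun x => H x z) a]
    simp only [e]
    rw [integral_const_mul, gauss_mean p hp a hcl]
    simp only [a]
    rw [hh, show z * r / (c + l) = z * (r / (c + l)) by ring, mul_pow]
    ring
  have key := integral_integral_swap hH
  simp only [h1, h2] at key
  rw [integral_mul_const, integral_const_mul, even_moment hs (by positivity)] at key
  have hπ : 0 < Real.sqrt Real.pi := Real.sqrt_pos.2 Real.pi_pos
  rw [← mul_left_inj' hπ.ne', key]
  have f1 : r ^ s = l ^ ((s:ℝ)/2) := by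
    simp only [r]
    rw [Real.sqrt_eq_rpow, ← Real.rpow_natCast, ← Real.rpow_mul hl.le]; congr 1; ring
  have f2 : (c + l) ^ s = (c + l) ^ (s:ℝ) := (Real.rpow_natCast _ _).symm
  have f3 : Real.pi ^ ((n:ℝ)/2) = Real.pi ^ (((n:ℝ)-1)/2) * Real.sqrt Real.pi := by
    rw [Real.sqrt_eq_rpow, ← Real.rpow_add Real.pi_pos]; congr 1; ring
  have f4 : (c + l) ^ (-(((n:ℝ) - 1) / 2 + (s:ℝ) / 2)) =
      ((c + l) ^ ((n:ℝ)/2))⁻¹ * ((c + l) ^ (s:ℝ))⁻¹ * ((c + l) ^ (-((s:ℝ) + 1) / 2))⁻¹ := by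
    rw [← Real.rpow_neg hcl.le, ← Real.rpow_neg hcl.le, ← Real.rpow_neg hcl.le, ← Real.rpow_add hcl, ← Real.rpow_add hcl]
    congr 1; ring
  rw [Real.div_rpow Real.pi_pos.le hcl.le, Real.div_rpow hc.le hcl.le, div_pow, f1, f2, f3, f4]
  ring

lemma inner_l {a d e : ℝ} (ha : 0 < a) (hd : 0 ≤ d) :
    ∫ l in Set.Ioi (0:ℝ), l ^ (a - 1) * Real.exp (e - d * l) =
      Real.Gamma a * d ^ (-a) * Real.exp e := by
  have h : ∀ l : ℝ, l ^ (a - 1) * Real.exp (e - d * l) = l ^ (a - 1) * Real.exp (-(d * l)) * Real.exp e := by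
    intro l; rw [mul_assoc, ← Real.exp_add]; congr 2; ring
  simp only [h]
  rw [integral_mul_const]
  congr 1
  rcases hd.eq_or_lt with rfl | hd
  · rw [Real.zero_rpow (by linarith), mul_zero]
    simp
    exact integral_undef (not_integrableOn_Ioi_rpow _)
  · rw [Real.integral_rpow_mul_exp_neg_mul_Ioi ha hd, one_div, Real.inv_rpow hd.le, ← Real.rpow_neg hd.le, mul_comm]

lemma pe_one {n : ℕ} : pe (n := n) 1 = fun _ => 1 := by ext; simp [pe]

lemma J_eval {n s : ℕ} (hs : Even s) (p : MvPolynomial (Fin n) ℝ)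
    (hp : ∀ y, ∑ i, pe (MvPolynomial.pderiv i (MvPolynomial.pderiv i p)) y = 0)
    (hh : ∀ (t : ℝ) y, pe p (t • y) = t ^ s * pe p y)
    {v : EuclideanSpace ℝ (Fin n)} (hv : ‖v‖ = 1)
    {a q : ℝ} (ha : 0 < a) (hq : 0 < q) (haq : a + q = ((n:ℝ) - 1) / 2) :
    Integrable (fun x => pe p x * ((‖x‖ ^ 2 - ⟪x, v⟫ ^ 2) ^ (-a) * Real.exp (-‖x‖ ^ 2))) ∧
    ∫ x, pe p x * ((‖x‖ ^ 2 - ⟪x, v⟫ ^ 2) ^ (-a) * Real.exp (-‖x‖ ^ 2)) =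
      (Real.Gamma a)⁻¹ * (Real.pi ^ (((n:ℝ) - 1) / 2) * pe p v * Real.Gamma (((s:ℝ) + 1) / 2) *
        (Real.Gamma (a + s / 2) * Real.Gamma q / Real.Gamma (a + s / 2 + q))) := by
  have cp := pe_continuous p
  set ν : Measure ℝ := volume.restrict (Set.Ioi 0)
  set B : EuclideanSpace ℝ (Fin n) × ℝ → ℝ := fun z =>
    z.2 ^ (a - 1) * Real.exp (-(1/2 + z.2) * ‖z.1‖ ^ 2 + z.2 * ⟪z.1, v⟫ ^ 2)
  have hB : Integrable B ((volume : Measure (EuclideanSpace ℝ (Fin n))).prod ν) := by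
    rw [integrable_prod_iff']
    · constructor
      · filter_upwards [ae_restrict_mem measurableSet_Ioi] with l hl
        have := aniso_int (1 : MvPolynomial (Fin n) ℝ) hv (c := 1/2) one_half_pos (le_of_lt hl)
        simp only [pe_one, one_mul] at this
        exact this.const_mul (l ^ (a - 1))
      · refine ((beta_aux ha hq (c := 1/2) one_half_pos).1.const_mul (Real.pi ^ (((n:ℝ) - 1) / 2) * 1 * Real.Gamma ((((0:ℕ):ℝ) + 1) / 2) * (1/2) ^ (-(((0:ℕ):ℝ) + 1) / 2))).congr ?_
        filter_upwards [ae_restrict_mem measurableSet_Ioi] with l hl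
        have hl' : 0 < l := hl
        have := aniso_gauss (s := 0) (by simp) (1 : MvPolynomial (Fin n) ℝ) (by simp [pe]) (by simp [pe]) hv (c := 1/2) one_half_pos hl
        simp only [pe_one, one_mul] at this
        have e : ∀ x, ‖B (x, l)‖ = l ^ (a - 1) * Real.exp (-(1/2 + l) * ‖x‖ ^ 2 + l * ⟪x, v⟫ ^ 2) := by
          intro x
          simp only [B]
          rw [Real.norm_of_nonneg (by positivity)]
        simp only [e]
        rw [integral_const_mul, this, haq]
        simp
        ring
    · apply Measurable.aestronglyMeasurable
      simp only [B]
      fun_prop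
  set F : EuclideanSpace ℝ (Fin n) → ℝ → ℝ := fun x l =>
    pe p x * (l ^ (a - 1) * Real.exp (-(1 + l) * ‖x‖ ^ 2 + l * ⟪x, v⟫ ^ 2))
  have hF : Integrable (Function.uncurry F) ((volume : Measure (EuclideanSpace ℝ (Fin n))).prod ν) := by
    obtain ⟨C, hC, h⟩ := pe_growth p (1/2) (by positivity)
    have := hB.bdd_mul (f := fun z => pe p z.1 * Real.exp (-(1/2) * ‖z.1‖ ^ 2)) (c := C) (by
      apply Continuous.aestronglyMeasurable; fun_prop) (.of_forall fun z => by
        rw [norm_mul, Real.norm_eq_abs, Real.norm_eq_abs, Real.abs_exp]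
        calc _ ≤ C * Real.exp (1/2 * ‖z.1‖ ^ 2) * Real.exp (-(1/2) * ‖z.1‖ ^ 2) := by gcongr; exact h _
          _ = C := by rw [mul_assoc, ← Real.exp_add]; simp)
    refine this.congr (.of_forall fun z => ?_)
    simp only [Function.uncurry_def, F, B]
    have e : Real.exp (-(1 + z.2) * ‖z.1‖ ^ 2 + z.2 * ⟪z.1, v⟫ ^ 2) = Real.exp (-(1/2) * ‖z.1‖ ^ 2) * Real.exp (-(1/2 + z.2) * ‖z.1‖ ^ 2 + z.2 * ⟪z.1, v⟫ ^ 2) := by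
      rw [← Real.exp_add]; congr 1; ring
    rw [e]
    ring
  have h1 : ∀ x, ∫ l, F x l ∂ν = Real.Gamma a * (pe p x * ((‖x‖ ^ 2 - ⟪x, v⟫ ^ 2) ^ (-a) * Real.exp (-‖x‖ ^ 2))) := by
    intro x
    simp only [F]
    rw [integral_const_mul]
    have e : ∀ l : ℝ, -(1 + l) * ‖x‖ ^ 2 + l * ⟪x, v⟫ ^ 2 = -‖x‖ ^ 2 - (‖x‖ ^ 2 - ⟪x, v⟫ ^ 2) * l := fun l => by ring
    simp only [e, ν]
    rw [inner_l ha (sub_nonneg.2 (inner_sq_le hv x))]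
    ring
  have h2 : ∀ l ∈ Set.Ioi (0:ℝ), ∫ x, F x l = Real.pi ^ (((n:ℝ) - 1) / 2) * pe p v * Real.Gamma (((s:ℝ) + 1) / 2) *
      (l ^ (a + s / 2 - 1) * (1 + l) ^ (-(a + s / 2 + q))) := by
    intro l hl
    have hl' : 0 < l := hl
    have e : ∀ x, F x l = l ^ (a - 1) * (pe p x * Real.exp (-(1 + l) * ‖x‖ ^ 2 + l * ⟪x, v⟫ ^ 2)) := by
      intro x; simp only [F]; ring
    simp only [e]
    rw [integral_const_mul, aniso_gauss hs p hp hh hv one_pos hl, ← haq, Real.one_rpow,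
      show a + s / 2 - 1 = (a - 1) + (s:ℝ)/2 by ring, Real.rpow_add hl',
      show a + (s:ℝ) / 2 + q = a + q + (s:ℝ)/2 by ring]
    ring
  have hΓ := Real.Gamma_pos_of_pos ha
  have hI := hF.integral_prod_left
  have key := integral_integral_swap hF
  constructor
  · have := hI.const_mul (Real.Gamma a)⁻¹
    refine this.congr (.of_forall fun x => ?_)
    have := h1 x
    simp only [Function.uncurry]
    rw [this, ← mul_assoc, inv_mul_cancel₀ hΓ.ne', one_mul]
  · simp only [h1] at key
    rw [integral_const_mul, setIntegral_congr_fun measurableSet_Ioi h2, integral_const_mul,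
      (beta_aux (by positivity) hq one_pos).2, Real.one_rpow, mul_one] at key
    rw [← key, ← mul_assoc, inv_mul_cancel₀ hΓ.ne', one_mul]

lemma polar {n : ℕ} (hn : 0 < n) (g : EuclideanSpace ℝ (Fin n) → ℝ)
    (h : Metric.sphere (0 : EuclideanSpace ℝ (Fin n)) 1 → ℝ) (φ : ℝ → ℝ)
    (hφ : ∀ r, 0 < r → φ r ≠ 0)
    (hg : ∀ (u : Metric.sphere (0 : EuclideanSpace ℝ (Fin n)) 1) (r : ℝ), 0 < r → g (r • (u : EuclideanSpace ℝ (Fin n))) = h u * φ r)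
    (hi : Integrable g) :
    Integrable h (sphereMeasure n) ∧
    ∫ x, g x = (∫ u, h u ∂(sphereMeasure n)) * ∫ r in Set.Ioi (0:ℝ), r ^ (n - 1) * φ r := by
  have : Nonempty (Fin n) := ⟨⟨0, hn⟩⟩
  have hdim : Module.finrank ℝ (EuclideanSpace ℝ (Fin n)) = n := by simp
  have mp := (volume : Measure (EuclideanSpace ℝ (Fin n))).measurePreserving_homeomorphUnitSphereProd
  rw [hdim] at mp
  have emb := (homeomorphUnitSphereProd (EuclideanSpace ℝ (Fin n))).measurableEmbedding
  have e : ∀ x : ({0}ᶜ : Set (EuclideanSpace ℝ (Fin n))), g x = (fun z : Metric.sphere (0:(EuclideanSpace ℝ (Fin n))) 1 × Set.Ioi (0:ℝ) => h z.1 * φ z.2) (homeomorphUnitSphereProd (EuclideanSpace ℝ (Fin n)) x) := by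
    intro x
    have hx : (0:ℝ) < ‖(x:(EuclideanSpace ℝ (Fin n)))‖ := norm_pos_iff.2 x.2
    simp only
    rw [← hg _ _ (homeomorphUnitSphereProd (EuclideanSpace ℝ (Fin n)) x).2.2]
    congr 1
    simp [smul_smul, hx.ne']
  have hi2 : Integrable (fun z : Metric.sphere (0:(EuclideanSpace ℝ (Fin n))) 1 × Set.Ioi (0:ℝ) => h z.1 * φ z.2)
      ((sphereMeasure n).prod (Measure.volumeIoiPow (n - 1))) := by
    rw [sphereMeasure, ← mp.integrable_comp_emb emb]
    have : Integrable (fun x : ({0}ᶜ : Set (EuclideanSpace ℝ (Fin n))) => g x) (Measure.comap Subtype.val volume) :=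
      (integrableOn_iff_comap_subtypeVal (measurableSet_singleton _).compl).1 hi.integrableOn
    exact this.congr (.of_forall e)
  have : IsFiniteMeasure (sphereMeasure n) := by unfold sphereMeasure; infer_instance
  constructor
  · have hae := hi2.prod_left_ae
    have hne : Measure.volumeIoiPow (n - 1) ≠ 0 := by
      intro h0
      have := Measure.volumeIoiPow_apply_Iio (n - 1) ⟨1, Set.mem_Ioi.2 one_pos⟩
      rw [h0] at this
      simp at this
      have h3 : (0:ℝ) ≤ ((n - 1 : ℕ):ℝ) := Nat.cast_nonneg _
      linarith
    have : (ae (Measure.volumeIoiPow (n - 1))).NeBot := ae_neBot.2 hne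
    obtain ⟨r, hr⟩ := hae.exists
    have hr0 := hφ r r.2
    refine (hr.mul_const (φ r)⁻¹).congr (.of_forall fun u => ?_)
    simp [hr0]
  · calc ∫ x, g x = ∫ x : ({0}ᶜ : Set (EuclideanSpace ℝ (Fin n))), g x ∂(Measure.comap Subtype.val volume) := by
          rw [integral_subtype_comap (measurableSet_singleton _).compl g, restrict_compl_singleton]
      _ = ∫ z, (fun z : Metric.sphere (0:(EuclideanSpace ℝ (Fin n))) 1 × Set.Ioi (0:ℝ) => h z.1 * φ z.2) z ∂((sphereMeasure n).prod (Measure.volumeIoiPow (n - 1))) := by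
          simp only [e]
          exact mp.integral_comp emb (fun z : Metric.sphere (0:(EuclideanSpace ℝ (Fin n))) 1 × Set.Ioi (0:ℝ) => h z.1 * φ z.2)
      _ = (∫ u, h u ∂(sphereMeasure n)) * ∫ r : Set.Ioi (0:ℝ), φ r ∂(Measure.volumeIoiPow (n - 1)) :=
          integral_prod_mul h (fun r : Set.Ioi (0:ℝ) => φ r)
      _ = _ := by
          congr 1
          simp only [Measure.volumeIoiPow, ENNReal.ofReal]
          rw [integral_withDensity_eq_integral_smul,
            integral_subtype_comap measurableSet_Ioi fun a ↦ Real.toNNReal (a ^ (n - 1)) • φ a,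
            setIntegral_congr_fun measurableSet_Ioi fun x hx ↦ ?_]
          · rw [NNReal.smul_def, Real.coe_toNNReal _ (pow_nonneg (le_of_lt hx) _), smul_eq_mul]
          · exact (measurable_subtype_coe.pow_const _).real_toNNReal

/-- The Funk–Hecke type evaluation of `∫_{S^{n-1}} f(u) (1 - ⟨u,v⟩²)^{(k-n)/2} dσ(u)` for a
harmonic homogeneous polynomial `f` of even degree `s`. -/
theorem funk_hecke_cos_transform (n k s : ℕ) (hn : 3 ≤ n) (hk2 : 2 ≤ k) (hk : k ≤ n - 1)
    (hs : Even s) (f : EuclideanSpace ℝ (Fin n) → ℝ) (hf : IsHarmonicHomogeneous n s f)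
    (v : EuclideanSpace ℝ (Fin n)) (hv : v ∈ Metric.sphere (0 : EuclideanSpace ℝ (Fin n)) 1) :
    Integrable (fun u : Metric.sphere (0 : EuclideanSpace ℝ (Fin n)) 1 =>
        f u * (1 - ⟪(u : EuclideanSpace ℝ (Fin n)), v⟫ ^ 2) ^ (((k : ℝ) - n) / 2))
      (sphereMeasure n) ∧
    ∫ u : Metric.sphere (0 : EuclideanSpace ℝ (Fin n)) 1,
        f u * (1 - ⟪(u : EuclideanSpace ℝ (Fin n)), v⟫ ^ 2) ^ (((k : ℝ) - n) / 2)
        ∂(sphereMeasure n)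
      = (ω ((n : ℝ) - 1) * ω k / ω ((k : ℝ) - 1)) *
          (Real.Gamma (((n : ℝ) - 1) / 2) * Real.Gamma ((k : ℝ) / 2) *
            Real.Gamma (((s : ℝ) + n - k) / 2) * Real.Gamma (((s : ℝ) + 1) / 2)) /
          (Real.Gamma (1 / 2) * Real.Gamma (((n : ℝ) - k) / 2) *
            Real.Gamma (((s : ℝ) + k) / 2) * Real.Gamma (((s : ℝ) + n - 1) / 2)) *
          f v := by
  obtain ⟨⟨p, hpf⟩, hhom, hharm⟩ := hf
  have hfp : f = pe p := funext hpf
  have hv1 : ‖v‖ = 1 := by simpa using hv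
  have hp := pe_harmonic hpf hharm
  rw [hfp] at hhom
  have hh := pe_homog hhom
  have hkn : k < n := by omega
  have hkn' : (k:ℝ) < n := by exact_mod_cast hkn
  have hk2' : (2:ℝ) ≤ k := by exact_mod_cast hk2
  set a : ℝ := ((n:ℝ) - k) / 2 with ha_def
  have ha : 0 < a := by rw [ha_def]; linarith
  set q : ℝ := ((k:ℝ) - 1) / 2 with hq_def
  have hq : 0 < q := by rw [hq_def]; linarith
  have haq : a + q = ((n:ℝ) - 1) / 2 := by rw [ha_def, hq_def]; ring
  obtain ⟨hJi, hJ⟩ := J_eval hs p hp hh hv1 ha hq haq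
  obtain ⟨hi, hI⟩ := polar (n := n) (by omega) _
    (fun u : Metric.sphere (0 : EuclideanSpace ℝ (Fin n)) 1 =>
        f u * (1 - ⟪(u : EuclideanSpace ℝ (Fin n)), v⟫ ^ 2) ^ (((k : ℝ) - n) / 2))
    (fun r => r ^ s * ((r ^ 2) ^ (-a) * Real.exp (-r ^ 2)))
    (fun r hr => by positivity) (by
      intro u r hr
      have hu : ‖(u : EuclideanSpace ℝ (Fin n))‖ = 1 := by simp
      have h0 : 0 ≤ 1 - ⟪(u : EuclideanSpace ℝ (Fin n)), v⟫ ^ 2 := by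
        have := inner_sq_le hv1 (u : EuclideanSpace ℝ (Fin n))
        rw [hu] at this
        linarith
      rw [hh, norm_smul, hu, real_inner_smul_left, Real.norm_of_nonneg hr.le, mul_one, mul_pow,
        show r ^ 2 - r ^ 2 * ⟪(u : EuclideanSpace ℝ (Fin n)), v⟫ ^ 2 =
          r ^ 2 * (1 - ⟪(u : EuclideanSpace ℝ (Fin n)), v⟫ ^ 2) by ring,
        Real.mul_rpow (by positivity) h0, hfp, show ((k:ℝ) - n) / 2 = -a by rw [ha_def]; ring]
      ring) hJi
  refine ⟨hi, ?_⟩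
  have hR : ∫ r in Set.Ioi (0:ℝ), r ^ (n - 1) * (r ^ s * ((r ^ 2) ^ (-a) * Real.exp (-r ^ 2))) =
      1 / 2 * Real.Gamma (((s:ℝ) + k) / 2) := by
    have h2 := integral_rpow_mul_exp_neg_mul_rpow (p := 2) (q := (s:ℝ) + k - 1) (b := 1) two_pos
      (by have : (0:ℝ) ≤ s := Nat.cast_nonneg s
          linarith) one_pos
    rw [Real.one_rpow, one_mul, sub_add_cancel] at h2
    rw [← h2]
    refine setIntegral_congr_fun measurableSet_Ioi fun r hr => ?_
    have hr' : 0 < r := hr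
    have hn1 : ((n - 1 : ℕ) : ℝ) = (n:ℝ) - 1 := by rw [Nat.cast_sub (by omega)]; simp
    rw [← Real.rpow_natCast r (n - 1), ← Real.rpow_natCast r s, hn1, ← Real.rpow_two,
      ← Real.rpow_mul hr'.le, ← mul_assoc, ← mul_assoc, ← Real.rpow_add hr', ← Real.rpow_add hr',
      neg_one_mul]
    congr 2
    rw [ha_def]; ring
  rw [hJ, hR] at hI
  have hs0 : (0:ℝ) ≤ s := Nat.cast_nonneg s
  have hG1 : 0 < Real.Gamma (((s:ℝ) + k) / 2) := Real.Gamma_pos_of_pos (by linarith)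
  have hG2 : 0 < Real.Gamma a := Real.Gamma_pos_of_pos ha
  have hG3 : 0 < Real.Gamma q := Real.Gamma_pos_of_pos hq
  have hG4 : 0 < Real.Gamma (((s:ℝ) + n - 1) / 2) := Real.Gamma_pos_of_pos (by linarith)
  have hG5 : 0 < Real.Gamma (((n:ℝ) - 1) / 2) := Real.Gamma_pos_of_pos (by linarith)
  have hG6 : 0 < Real.Gamma ((k:ℝ) / 2) := Real.Gamma_pos_of_pos (by linarith)
  have hπ : 0 < Real.sqrt Real.pi := Real.sqrt_pos.2 Real.pi_pos
  have hπq : 0 < Real.pi ^ q := Real.rpow_pos_of_pos Real.pi_pos _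
  have eπ : Real.pi ^ ((k:ℝ)/2) = Real.pi ^ q * Real.sqrt Real.pi := by
    rw [Real.sqrt_eq_rpow, ← Real.rpow_add Real.pi_pos, hq_def]; congr 1; ring
  rw [show a + (s:ℝ)/2 + q = ((s:ℝ) + n - 1) / 2 by rw [ha_def, hq_def]; ring,
    show a + (s:ℝ)/2 = ((s:ℝ) + n - k) / 2 by rw [ha_def]; ring, ← hfp] at hI
  have hI' := (eq_div_iff (show (1 / 2 * Real.Gamma (((s:ℝ) + k) / 2)) ≠ 0 by positivity)).2 hI.symm
  rw [hI', Real.Gamma_one_half_eq]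
  unfold ω
  rw [eπ, ← hq_def]
  field_simp
end

section
/- For every integer n ≥ 2 and every integer s ≥ 0 there exist a harmonic homogeneous polynomial f of degree s on ℝⁿ, a harmonic homogeneous polynomial h of degree s+2 on ℝⁿ, and a symmetric real n×n matrix X with trace 0, such that ∫_{S^{n−1}} ⟨Xy, y⟩ · f(y) · h(y) dσ(y) ≠ 0. -/
open MeasureTheory
open scoped RealInnerProductSpace

/-- The action of a matrix `X` on a vector `y ∈ ℝⁿ`, as a vector of Euclidean space. -/
noncomputable def mulVecE {n : ℕ} (X : Matrix (Fin n) (Fin n) ℝ)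
    (y : EuclideanSpace ℝ (Fin n)) : EuclideanSpace ℝ (Fin n) :=
  (WithLp.equiv 2 (Fin n → ℝ)).symm (X.mulVec fun i => y i)

noncomputable def zL {n : ℕ} (a b : Fin n) : EuclideanSpace ℝ (Fin n) →L[ℝ] ℂ :=
  (EuclideanSpace.proj a : EuclideanSpace ℝ (Fin n) →L[ℝ] ℝ).smulRight (1 : ℂ) +
  (EuclideanSpace.proj b : EuclideanSpace ℝ (Fin n) →L[ℝ] ℝ).smulRight Complex.I

lemma zL_apply {n : ℕ} (a b : Fin n) (y : EuclideanSpace ℝ (Fin n)) :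
    zL a b y = ⟨y a, y b⟩ := by
  apply Complex.ext <;> simp [zL]

lemma poly_re_im {n : ℕ} (a b : Fin n) (s : ℕ) :
    ∃ p q : MvPolynomial (Fin n) ℝ, ∀ y : EuclideanSpace ℝ (Fin n),
      ((zL a b y) ^ s).re = MvPolynomial.eval (fun i => y i) p ∧
      ((zL a b y) ^ s).im = MvPolynomial.eval (fun i => y i) q := by
  induction s with
  | zero => exact ⟨1, 0, fun y => by simp⟩
  | succ k ih =>
    obtain ⟨p, q, h⟩ := ih
    refine ⟨p * MvPolynomial.X a - q * MvPolynomial.X b,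
      p * MvPolynomial.X b + q * MvPolynomial.X a, fun y => ?_⟩
    obtain ⟨h1, h2⟩ := h y
    rw [pow_succ, Complex.mul_re, Complex.mul_im, h1, h2]
    simp [zL_apply]

lemma hasFDeriv_pow {n : ℕ} (L : EuclideanSpace ℝ (Fin n) →L[ℝ] ℂ) (φ : ℂ →L[ℝ] ℝ) (c : ℂ)
    (s : ℕ) (y v : EuclideanSpace ℝ (Fin n)) :
    fderiv ℝ (fun z => φ (c * (L z) ^ s)) y v = φ (c * s * L v * (L y) ^ (s - 1)) := by
  have h1 : HasFDerivAt (fun z => φ (c * (L z) ^ s)) _ y :=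
    φ.hasFDerivAt.comp y (((L.hasFDerivAt (x := y)).pow s).const_mul c)
  rw [h1.fderiv]
  simp
  congr 1
  ring

lemma harm {n : ℕ} (a b : Fin n) (hab : a ≠ b) (φ : ℂ →L[ℝ] ℝ) (s : ℕ)
    (y : EuclideanSpace ℝ (Fin n)) :
    ∑ i, secondPartialDeriv (fun z => φ ((zL a b z) ^ s)) i i y = 0 := by
  have h1 : ∀ z v, fderiv ℝ (fun z => φ ((zL a b z) ^ s)) z v
      = φ ((s * zL a b v) * (zL a b z) ^ (s - 1)) := by
    intro z v
    have := hasFDeriv_pow (zL a b) φ 1 s z v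
    simpa using this
  have h2 : ∀ i, secondPartialDeriv (fun z => φ ((zL a b z) ^ s)) i i y
      = φ ((zL a b (EuclideanSpace.single i 1)) ^ 2 *
        (s * ((s - 1 : ℕ) : ℂ) * (zL a b y) ^ (s - 1 - 1))) := by
    intro i
    unfold secondPartialDeriv
    simp only [h1]
    rw [hasFDeriv_pow]
    congr 1
    ring
  simp only [h2]
  rw [← map_sum, ← Finset.sum_mul]
  have h3 : ∑ i, (zL a b (EuclideanSpace.single i 1)) ^ 2 = 0 := by
    rw [Finset.sum_eq_add a b hab]
    · simp [zL, hab, hab.symm]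
    · intro c _ hc
      simp [zL, hc.1.symm, hc.2.symm]
    · simp
    · simp
  rw [h3]; simp

lemma isHH_re {n : ℕ} (a b : Fin n) (hab : a ≠ b) (s : ℕ) :
    IsHarmonicHomogeneous n s (fun z => ((zL a b z) ^ s).re) := by
  obtain ⟨p, q, h⟩ := poly_re_im a b s
  refine ⟨⟨p, fun y => (h y).1⟩, fun t _ y => ?_, fun y => harm a b hab Complex.reCLM s y⟩
  simp only [map_smul, smul_pow, Complex.smul_re, smul_eq_mul]

lemma isHH_im {n : ℕ} (a b : Fin n) (hab : a ≠ b) (s : ℕ) :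
    IsHarmonicHomogeneous n s (fun z => ((zL a b z) ^ s).im) := by
  obtain ⟨p, q, h⟩ := poly_re_im a b s
  refine ⟨⟨q, fun y => (h y).2⟩, fun t _ y => ?_, fun y => harm a b hab Complex.imCLM s y⟩
  simp only [map_smul, smul_pow, Complex.smul_im, smul_eq_mul]

lemma exists_X_re {n : ℕ} (a b : Fin n) (hab : a ≠ b) :
    ∃ X : Matrix (Fin n) (Fin n) ℝ, X.IsSymm ∧ X.trace = 0 ∧
      ∀ y : EuclideanSpace ℝ (Fin n), ⟪mulVecE X y, y⟫ = ((zL a b y) ^ 2).re := by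
  refine ⟨Matrix.single a a 1 - Matrix.single b b 1, ?_, ?_, fun y => ?_⟩
  · simp [Matrix.IsSymm, Matrix.transpose_sub]
  · simp [Matrix.trace_sub]
  · rw [zL_apply]
    simp [mulVecE, PiLp.inner_apply, Matrix.sub_mulVec, mul_sub, Finset.sum_sub_distrib,
      Matrix.single_mulVec, Function.update_apply, pow_two]

lemma exists_X_im {n : ℕ} (a b : Fin n) (hab : a ≠ b) :
    ∃ X : Matrix (Fin n) (Fin n) ℝ, X.IsSymm ∧ X.trace = 0 ∧
      ∀ y : EuclideanSpace ℝ (Fin n), ⟪mulVecE X y, y⟫ = ((zL a b y) ^ 2).im := by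
  refine ⟨Matrix.single a b 1 + Matrix.single b a 1, ?_, ?_, fun y => ?_⟩
  · simp [Matrix.IsSymm, Matrix.transpose_add, add_comm]
  · simp [Matrix.trace_add, hab, hab.symm]
  · rw [zL_apply]
    simp [mulVecE, PiLp.inner_apply, Matrix.add_mulVec, mul_add, Finset.sum_add_distrib,
      Matrix.single_mulVec, Function.update_apply, pow_two]

/-- There exist harmonic homogeneous polynomials `f` of degree `s` and `h` of degree `s+2`
and a trace-free symmetric matrix `X` with `∫_{S^{n-1}} ⟨Xy,y⟩ f(y) h(y) dσ(y) ≠ 0`. -/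
theorem exists_nonvanishing_pairing (n s : ℕ) (hn : 2 ≤ n) :
    ∃ (f h : EuclideanSpace ℝ (Fin n) → ℝ) (X : Matrix (Fin n) (Fin n) ℝ),
      IsHarmonicHomogeneous n s f ∧ IsHarmonicHomogeneous n (s + 2) h ∧
      X.IsSymm ∧ X.trace = 0 ∧
      (∫ y : Metric.sphere (0 : EuclideanSpace ℝ (Fin n)) 1,
          ⟪mulVecE X y, (y : EuclideanSpace ℝ (Fin n))⟫ * f y * h y ∂(sphereMeasure n)) ≠ 0 := by
  obtain ⟨a, b, hab⟩ : ∃ a b : Fin n, a ≠ b :=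
    ⟨⟨0, by omega⟩, ⟨1, by omega⟩, by simp⟩
  obtain ⟨X, hX1, hX2, hX⟩ := exists_X_re a b hab
  obtain ⟨Y, hY1, hY2, hY⟩ := exists_X_im a b hab
  haveI : IsFiniteMeasure (sphereMeasure n) := by unfold sphereMeasure; infer_instance
  haveI : (sphereMeasure n).IsOpenPosMeasure := by unfold sphereMeasure; infer_instance
  by_contra! H
  have e1 := H _ _ X (isHH_re a b hab s) (isHH_re a b hab (s + 2)) hX1 hX2
  have e2 := H _ _ Y (isHH_im a b hab s) (isHH_re a b hab (s + 2)) hY1 hY2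
  have e3 := H _ _ X (isHH_im a b hab s) (isHH_im a b hab (s + 2)) hX1 hX2
  have e4 := H _ _ Y (isHH_re a b hab s) (isHH_im a b hab (s + 2)) hY1 hY2
  simp only [hX, hY] at e1 e2 e3 e4
  have hint : ∀ g : Metric.sphere (0 : EuclideanSpace ℝ (Fin n)) 1 → ℝ, Continuous g →
      Integrable g (sphereMeasure n) := fun g hg =>
    hg.integrable_of_hasCompactSupport (HasCompactSupport.of_compactSpace g)
  have hc : Continuous fun y : Metric.sphere (0 : EuclideanSpace ℝ (Fin n)) 1 =>
      zL a b (y : EuclideanSpace ℝ (Fin n)) := (zL a b).continuous.comp continuous_subtype_val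
  have hr : ∀ k : ℕ, Continuous fun y : Metric.sphere (0 : EuclideanSpace ℝ (Fin n)) 1 =>
      ((zL a b (y : EuclideanSpace ℝ (Fin n))) ^ k).re :=
    fun k => Complex.continuous_re.comp (hc.pow k)
  have hi : ∀ k : ℕ, Continuous fun y : Metric.sphere (0 : EuclideanSpace ℝ (Fin n)) 1 =>
      ((zL a b (y : EuclideanSpace ℝ (Fin n))) ^ k).im :=
    fun k => Complex.continuous_im.comp (hc.pow k)
  have i1 := hint _ (((hr 2).mul (hr s)).mul (hr (s + 2)))
  have i2 := hint _ (((hi 2).mul (hi s)).mul (hr (s + 2)))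
  have i3 := hint _ (((hr 2).mul (hi s)).mul (hi (s + 2)))
  have i4 := hint _ (((hi 2).mul (hr s)).mul (hi (s + 2)))
  have hpos : 0 < ∫ y : Metric.sphere (0 : EuclideanSpace ℝ (Fin n)) 1,
      Complex.normSq ((zL a b (y : EuclideanSpace ℝ (Fin n))) ^ (s + 2)) ∂(sphereMeasure n) := by
    have hcn : Continuous fun y : Metric.sphere (0 : EuclideanSpace ℝ (Fin n)) 1 =>
        Complex.normSq ((zL a b (y : EuclideanSpace ℝ (Fin n))) ^ (s + 2)) :=
      Complex.continuous_normSq.comp (hc.pow _)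
    refine integral_pos_of_integrable_nonneg_nonzero
      (x := ⟨EuclideanSpace.single a 1, by simp⟩) hcn (hint _ hcn)
      (fun y => Complex.normSq_nonneg _) ?_
    have : zL a b (EuclideanSpace.single a 1) = 1 := by
      simp [zL, hab, hab.symm]
    simp [this]
  have hsum := integral_add ((i1.sub i2).add i3) i4
  have hsum2 := integral_add (i1.sub i2) i3
  have hsum3 := integral_sub i1 i2
  simp only [Pi.add_apply, Pi.sub_apply, Pi.mul_apply] at hsum hsum2 hsum3
  rw [hsum2, hsum3, e1, e2, e3, e4] at hsum
  have hEq : ∀ w : ℂ, Complex.normSq (w ^ (s + 2)) =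
      (w ^ 2).re * (w ^ s).re * (w ^ (s + 2)).re - (w ^ 2).im * (w ^ s).im * (w ^ (s + 2)).re +
      (w ^ 2).re * (w ^ s).im * (w ^ (s + 2)).im + (w ^ 2).im * (w ^ s).re * (w ^ (s + 2)).im := by
    intro w
    rw [pow_add w s 2]
    generalize w ^ s = p
    generalize w ^ 2 = q
    rw [Complex.normSq_apply, Complex.mul_re, Complex.mul_im]
    ring
  simp only [hEq] at hpos
  linarith
end

section
/- Let n ≥ 2, let X be a symmetric real n×n matrix with trace 0, and let f, h : ℝⁿ \ {0} → ℝ be smooth functions that are positively homogeneous of degree 0 (i.e. f(ty) = f(y) and h(ty) = h(y) for all t > 0). Then ∫_{S^{n−1}} [⟨∇f(y), Xy⟩ · h(y) + f(y) · ⟨∇h(y), Xy⟩] dσ(y) = n · ∫_{S^{n−1}} ⟨Xy, y⟩ · f(y) · h(y) dσ(y). -/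
open MeasureTheory
open scoped RealInnerProductSpace

open Set

lemma mulVecE_smul' {n : ℕ} (X : Matrix (Fin n) (Fin n) ℝ) (t : ℝ) (y : EuclideanSpace ℝ (Fin n)) :
    mulVecE X (t • y) = t • mulVecE X y := by
  ext i
  simp [mulVecE, Matrix.mulVec, dotProduct, Finset.mul_sum, mul_left_comm]

lemma mulVecE_one' {n : ℕ} (y : EuclideanSpace ℝ (Fin n)) :
    mulVecE (1 : Matrix (Fin n) (Fin n) ℝ) y = y := by
  ext i
  simp [mulVecE]

noncomputable def rowL {n : ℕ} (X : Matrix (Fin n) (Fin n) ℝ) (i : Fin n) :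
    EuclideanSpace ℝ (Fin n) →L[ℝ] ℝ :=
  ∑ j, X i j • (EuclideanSpace.proj j : EuclideanSpace ℝ (Fin n) →L[ℝ] ℝ)

lemma rowL_apply {n : ℕ} (X : Matrix (Fin n) (Fin n) ℝ) (i : Fin n)
    (y : EuclideanSpace ℝ (Fin n)) : rowL X i y = (mulVecE X y) i := by
  simp [rowL, mulVecE, Matrix.mulVec, dotProduct]

lemma rowL_single {n : ℕ} (X : Matrix (Fin n) (Fin n) ℝ) (i : Fin n) :
    rowL X i (EuclideanSpace.single i 1) = X i i := by
  simp [rowL_apply, mulVecE, Matrix.mulVec, dotProduct]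

lemma mulVecE_eq_sum {n : ℕ} (X : Matrix (Fin n) (Fin n) ℝ)
    (y : EuclideanSpace ℝ (Fin n)) :
    mulVecE X y = ∑ i, rowL X i y • EuclideanSpace.single i (1 : ℝ) := by
  ext k
  simp [rowL_apply, Finset.sum_apply, Pi.single_apply]

lemma continuous_mulVecE {n : ℕ} (X : Matrix (Fin n) (Fin n) ℝ) : Continuous (mulVecE X) := by
  have : mulVecE X = fun y => ∑ i, rowL X i y • EuclideanSpace.single i (1 : ℝ) :=
    funext (mulVecE_eq_sum X)
  rw [this]
  fun_prop

lemma div_lemma {n : ℕ} (X : Matrix (Fin n) (Fin n) ℝ) (G : EuclideanSpace ℝ (Fin n) → ℝ)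
    (hG : ContDiff ℝ 1 G) (hc : HasCompactSupport G) :
    Integrable (fun x => fderiv ℝ G x (mulVecE X x)) ∧
    ∫ x, fderiv ℝ G x (mulVecE X x) = - X.trace * ∫ x, G x := by
  have hcf := hG.continuous_fderiv one_ne_zero
  have hint : ∀ i, Integrable
      (fun x => rowL X i x * fderiv ℝ G x (EuclideanSpace.single i 1)) := by
    intro i
    apply Continuous.integrable_of_hasCompactSupport
    · fun_prop
    · exact (hc.fderiv_apply ℝ _).mul_left
  have heq : (fun x => fderiv ℝ G x (mulVecE X x)) =
      fun x => ∑ i, rowL X i x * fderiv ℝ G x (EuclideanSpace.single i 1) := by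
    funext x
    conv_lhs => rw [mulVecE_eq_sum]
    simp
  rw [heq]
  refine ⟨integrable_finsetSum _ fun i _ => hint i, ?_⟩
  rw [integral_finsetSum _ fun i _ => hint i]
  have hi : ∀ i, ∫ x, rowL X i x * fderiv ℝ G x (EuclideanSpace.single i 1) =
      - (X i i * ∫ x, G x) := by
    intro i
    rw [integral_mul_fderiv_eq_neg_fderiv_mul_of_integrable]
    · simp only [ContinuousLinearMap.fderiv, rowL_single, integral_const_mul]
    · simp only [ContinuousLinearMap.fderiv, rowL_single]
      exact (hG.continuous.integrable_of_hasCompactSupport hc).const_mul _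
    · exact hint i
    · apply Continuous.integrable_of_hasCompactSupport
      · exact (rowL X i).continuous.mul hG.continuous
      · exact hc.mul_left
    · intro x _
      exact (rowL X i).differentiableAt
    · intro x _
      exact hG.differentiable one_ne_zero x
  simp [hi, Matrix.trace, Finset.sum_mul]

lemma polar_lemma {n : ℕ} (hn : 0 < n) (g u : EuclideanSpace ℝ (Fin n) → ℝ) (w : ℝ → ℝ)
    (hg : ∀ r : ℝ, 0 < r → ∀ y : EuclideanSpace ℝ (Fin n), ‖y‖ = 1 → g (r • y) = u y * w r) :
    ∫ x, g x = (∫ y : Metric.sphere (0 : EuclideanSpace ℝ (Fin n)) 1, u y ∂(sphereMeasure n)) *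
      ∫ r : Ioi (0 : ℝ), w r
        ∂(Measure.volumeIoiPow (Module.finrank ℝ (EuclideanSpace ℝ (Fin n)) - 1)) := by
  haveI : Nonempty (Fin n) := ⟨⟨0, hn⟩⟩
  calc
    ∫ x, g x = ∫ x : ({(0)}ᶜ : Set (EuclideanSpace ℝ (Fin n))), g x.1 ∂((volume : Measure (EuclideanSpace ℝ (Fin n))).comap Subtype.val) := by
      rw [integral_subtype_comap (measurableSet_singleton _).compl g,
        restrict_compl_singleton]
    _ = ∫ x : ({(0)}ᶜ : Set (EuclideanSpace ℝ (Fin n))),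
        (fun p : Metric.sphere (0 : EuclideanSpace ℝ (Fin n)) 1 × Ioi (0 : ℝ) =>
          u p.1 * w p.2) (homeomorphUnitSphereProd _ x) ∂((volume : Measure (EuclideanSpace ℝ (Fin n))).comap Subtype.val) := by
      congr 1
      funext x
      have hx : x.1 ≠ 0 := x.2
      have hx' : ‖x.1‖ ≠ 0 := norm_ne_zero_iff.2 hx
      have := hg ‖x.1‖ (norm_pos_iff.2 hx) (‖x.1‖⁻¹ • x.1) (by simp [norm_smul, hx'])
      rw [smul_inv_smul₀ hx'] at this
      simp [this]
    _ = _ := by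
      refine ((Measure.measurePreserving_homeomorphUnitSphereProd
        (volume : Measure (EuclideanSpace ℝ (Fin n)))).integral_comp
        (Homeomorph.measurableEmbedding _)
        (fun p : Metric.sphere (0 : EuclideanSpace ℝ (Fin n)) 1 × Ioi (0 : ℝ) =>
          u p.1 * w p.2)).trans ?_
      exact integral_prod_mul (fun y : Metric.sphere (0 : EuclideanSpace ℝ (Fin n)) 1 => u y)
        (fun r : Ioi (0:ℝ) => w r)

lemma cutoff_contDiff {n : ℕ} (F : EuclideanSpace ℝ (Fin n) → ℝ) (ψ : ℝ → ℝ)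
    (hF : ContDiffOn ℝ 1 F {(0 : EuclideanSpace ℝ (Fin n))}ᶜ) (hψ : ContDiff ℝ 1 ψ)
    (hs : ∀ s, s ∉ Icc (1 : ℝ) 3 → ψ s = 0) :
    ContDiff ℝ 1 (fun x => F x * ψ (‖x‖ ^ 2)) ∧
    HasCompactSupport (fun x => F x * ψ (‖x‖ ^ 2)) := by
  constructor
  · rw [contDiff_iff_contDiffAt]
    intro x
    by_cases hx : x = 0
    · subst hx
      have : (fun x => F x * ψ (‖x‖ ^ 2)) =ᶠ[nhds 0] fun _ => 0 := by
        filter_upwards [Metric.ball_mem_nhds (0 : EuclideanSpace ℝ (Fin n)) one_pos] with y hy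
        have hy' : ‖y‖ < 1 := by simpa using hy
        rw [hs, mul_zero]
        rintro ⟨h1, -⟩
        nlinarith [norm_nonneg y]
      exact contDiffAt_const.congr_of_eventuallyEq this
    · refine (hF.contDiffAt (isOpen_compl_singleton.mem_nhds hx)).mul ?_
      exact (hψ.comp (contDiff_norm_sq ℝ)).contDiffAt
  · refine HasCompactSupport.intro (isCompact_closedBall (0 : EuclideanSpace ℝ (Fin n)) 2) ?_
    intro x hx
    have hx' : 2 < ‖x‖ := by simpa using hx
    rw [hs, mul_zero]
    rintro ⟨-, h1⟩
    nlinarith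

lemma fderiv_hom {n : ℕ} (F : EuclideanSpace ℝ (Fin n) → ℝ)
    (hF : ContDiffOn ℝ 1 F {(0 : EuclideanSpace ℝ (Fin n))}ᶜ)
    (hom : ∀ t : ℝ, 0 < t → ∀ y : EuclideanSpace ℝ (Fin n), y ≠ 0 → F (t • y) = F y)
    (t : ℝ) (ht : 0 < t) (y v : EuclideanSpace ℝ (Fin n)) (hy : y ≠ 0) :
    fderiv ℝ F (t • y) (t • v) = fderiv ℝ F y v := by
  have hty : t • y ≠ 0 := smul_ne_zero ht.ne' hy
  have hd : ∀ z, z ≠ 0 → DifferentiableAt ℝ F z := fun z hz =>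
    (hF.contDiffAt (isOpen_compl_singleton.mem_nhds hz)).differentiableAt one_ne_zero
  have h1 : HasFDerivAt (fun z => F (t • z))
      ((fderiv ℝ F (t • y)).comp (t • ContinuousLinearMap.id ℝ _)) y :=
    (hd _ hty).hasFDerivAt.comp y ((hasFDerivAt_id y).const_smul t)
  have h2 : (fun z => F (t • z)) =ᶠ[nhds y] F := by
    filter_upwards [isOpen_compl_singleton.mem_nhds (show y ∈ ({0}ᶜ : Set _) from hy)] with z hz
    exact hom t ht z hz
  have h3 := h1.unique ((hd y hy).hasFDerivAt.congr_of_eventuallyEq h2)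
  rw [← h3]
  simp

lemma main_lemma {n : ℕ} (hn : 2 ≤ n) (X : Matrix (Fin n) (Fin n) ℝ) (htr : X.trace = 0)
    (F : EuclideanSpace ℝ (Fin n) → ℝ)
    (hF : ContDiffOn ℝ 1 F {(0 : EuclideanSpace ℝ (Fin n))}ᶜ)
    (hom : ∀ t : ℝ, 0 < t → ∀ y : EuclideanSpace ℝ (Fin n), y ≠ 0 → F (t • y) = F y) :
    ∫ y : Metric.sphere (0 : EuclideanSpace ℝ (Fin n)) 1,
        fderiv ℝ F y (mulVecE X y) ∂(sphereMeasure n)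
      = n * ∫ y : Metric.sphere (0 : EuclideanSpace ℝ (Fin n)) 1,
          ⟪mulVecE X y, (y : EuclideanSpace ℝ (Fin n))⟫ * F y ∂(sphereMeasure n) := by
  let b : ContDiffBump (2 : ℝ) := ⟨1/2, 1, by norm_num, by norm_num⟩
  let φ : ℝ → ℝ := b
  have hφ : ContDiff ℝ 2 φ := b.contDiff
  have hφs : ∀ s, s ∉ Icc (1 : ℝ) 3 → φ s = 0 := by
    intro s hs
    apply b.zero_of_le_dist
    change (1 : ℝ) ≤ dist s 2
    rw [Real.dist_eq]
    by_contra! hlt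
    rw [abs_lt] at hlt
    exact hs ⟨by linarith, by linarith⟩
  have hφ1 : ContDiff ℝ 1 φ := hφ.of_le (by norm_num)
  have hφ' : ContDiff ℝ 1 (deriv φ) := by
    have : ContDiff ℝ (1 + 1) φ := by convert hφ using 1; norm_num
    exact (contDiff_succ_iff_deriv.1 this).2.2
  have hφs' : ∀ s, s ∉ Icc (1 : ℝ) 3 → deriv φ s = 0 := by
    intro s hs
    have : φ =ᶠ[nhds s] fun _ => 0 := by
      filter_upwards [isClosed_Icc.isOpen_compl.mem_nhds hs] with z hz using hφs z hz
    rw [this.deriv_eq]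
    simp
  -- general computation
  have key : ∀ (Y : Matrix (Fin n) (Fin n) ℝ) (H : EuclideanSpace ℝ (Fin n) → ℝ)
      (hH : ContDiffOn ℝ 1 H {(0 : EuclideanSpace ℝ (Fin n))}ᶜ)
      (hom : ∀ t : ℝ, 0 < t → ∀ y : EuclideanSpace ℝ (Fin n), y ≠ 0 → H (t • y) = H y),
      (∫ y : Metric.sphere (0 : EuclideanSpace ℝ (Fin n)) 1,
        fderiv ℝ H y (mulVecE Y y) ∂(sphereMeasure n)) *
        (∫ r : Ioi (0 : ℝ), φ ((r : ℝ) ^ 2)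
        ∂(Measure.volumeIoiPow (Module.finrank ℝ (EuclideanSpace ℝ (Fin n)) - 1))) +
      (∫ y : Metric.sphere (0 : EuclideanSpace ℝ (Fin n)) 1,
          ⟪mulVecE Y y, (y : EuclideanSpace ℝ (Fin n))⟫ * H y ∂(sphereMeasure n)) *
        (∫ r : Ioi (0 : ℝ), 2 * (r : ℝ) ^ 2 * deriv φ ((r : ℝ) ^ 2)
        ∂(Measure.volumeIoiPow (Module.finrank ℝ (EuclideanSpace ℝ (Fin n)) - 1))) =
      - Y.trace * ∫ x, H x * φ (‖x‖ ^ 2) := by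
    intro Y H hH hom
    obtain ⟨hG, hGc⟩ := cutoff_contDiff H φ hH hφ1 hφs
    obtain ⟨hG', hGc'⟩ := cutoff_contDiff H (deriv φ) hH hφ' hφs'
    obtain ⟨hi, he⟩ := div_lemma Y _ hG hGc
    rw [← he]
    have hfd : ∀ x : EuclideanSpace ℝ (Fin n), x ≠ 0 →
        fderiv ℝ (fun x => H x * φ (‖x‖ ^ 2)) x (mulVecE Y x) =
        fderiv ℝ H x (mulVecE Y x) * φ (‖x‖ ^ 2) +
        2 * ⟪mulVecE Y x, x⟫ * (H x * deriv φ (‖x‖ ^ 2)) := by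
      intro x hx
      have h1 : HasFDerivAt H (fderiv ℝ H x) x :=
        ((hH.contDiffAt (isOpen_compl_singleton.mem_nhds hx)).differentiableAt
          one_ne_zero).hasFDerivAt
      have h2 : HasDerivAt φ (deriv φ (‖x‖ ^ 2)) (‖x‖ ^ 2) :=
        (hφ1.differentiable one_ne_zero _).hasDerivAt
      have h3 := h2.comp_hasFDerivAt x (hasStrictFDerivAt_norm_sq x).hasFDerivAt
      have h4 := (h1.mul h3).fderiv
      simp only [Function.comp_def] at h4
      change fderiv ℝ (fun x => H x * φ (‖x‖ ^ 2)) x = _ at h4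
      rw [h4]
      simp [real_inner_comm]
      ring
    have hi2 : Integrable (fun x : EuclideanSpace ℝ (Fin n) =>
        2 * ⟪mulVecE Y x, x⟫ * (H x * deriv φ (‖x‖ ^ 2))) := by
      apply Continuous.integrable_of_hasCompactSupport
      · have := hG'.continuous
        have := continuous_mulVecE Y
        fun_prop
      · exact hGc'.mul_left
    have hne : ∀ᵐ x : EuclideanSpace ℝ (Fin n), x ≠ 0 := by
      haveI : Nonempty (Fin n) := ⟨⟨0, by omega⟩⟩
      exact Measure.ae_ne volume 0
    have hi1 : Integrable (fun x : EuclideanSpace ℝ (Fin n) =>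
        fderiv ℝ H x (mulVecE Y x) * φ (‖x‖ ^ 2)) := by
      refine (hi.sub hi2).congr ?_
      filter_upwards [hne] with x hx
      simp only [Pi.sub_apply]
      rw [hfd x hx]
      ring
    rw [integral_congr_ae (hne.mono hfd), integral_add hi1 hi2]
    congr 1
    · symm
      apply polar_lemma (by omega) _ (fun y => fderiv ℝ H y (mulVecE Y y)) (fun r => φ (r ^ 2))
      intro r hr y hy
      have hy0 : y ≠ 0 := by rintro rfl; simp at hy
      rw [mulVecE_smul', fderiv_hom H hH hom r hr y _ hy0]
      simp [norm_smul, hy]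
    · symm
      apply polar_lemma (by omega) _ (fun y => ⟪mulVecE Y y, y⟫ * H y)
        (fun r => 2 * r ^ 2 * deriv φ (r ^ 2))
      intro r hr y hy
      have hy0 : y ≠ 0 := by rintro rfl; simp at hy
      rw [mulVecE_smul', hom r hr y hy0]
      simp [norm_smul, hy, inner_smul_left, inner_smul_right]
      ring
  have k1 := key X F hF hom
  have k2 := key 1 (fun _ => 1) contDiffOn_const (fun _ _ _ _ => rfl)
  have k3 := polar_lemma (n := n) (by omega) (fun x => 1 * φ (‖x‖ ^ 2)) (fun _ => 1) (fun r => φ (r ^ 2))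
    (by intro r hr y hy; simp [norm_smul, hy])
  have hpos : 0 < ∫ x : EuclideanSpace ℝ (Fin n), 1 * φ (‖x‖ ^ 2) := by
    obtain ⟨hG, hGc⟩ := cutoff_contDiff (n := n) (fun _ => 1) φ contDiffOn_const hφ1 hφs
    refine hG.continuous.integral_pos_of_hasCompactSupport_nonneg_nonzero
      (x := EuclideanSpace.single ⟨0, by omega⟩ (Real.sqrt 2)) hGc ?_ ?_
    · intro x
      simp only [one_mul]
      exact b.nonneg
    · simp only [one_mul]
      have : φ 2 = 1 := b.one_of_mem_closedBall (Metric.mem_closedBall_self b.rIn_pos.le)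
      simp [this]
  have e1 : ∀ y : Metric.sphere (0 : EuclideanSpace ℝ (Fin n)) 1,
      ⟪mulVecE 1 (y : EuclideanSpace ℝ (Fin n)), (y : EuclideanSpace ℝ (Fin n))⟫ * (1 : ℝ) = 1 := by
    intro y
    rw [mulVecE_one']
    simp
  simp only [e1] at k2
  simp only [fderiv_fun_const, Pi.zero_apply, ContinuousLinearMap.zero_apply, integral_zero, zero_mul, zero_add] at k2
  rw [k3] at k2 hpos
  simp only [htr, neg_zero, zero_mul] at k1
  simp only [Matrix.trace_one, Fintype.card_fin] at k2
  revert k1 k2 hpos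
  generalize (∫ r : Ioi (0 : ℝ), φ ((r : ℝ) ^ 2) ∂_) = c1
  generalize (∫ r : Ioi (0 : ℝ), 2 * (r : ℝ) ^ 2 * deriv φ ((r : ℝ) ^ 2) ∂_) = c2
  generalize (∫ y : Metric.sphere (0 : EuclideanSpace ℝ (Fin n)) 1, (1 : ℝ) ∂_) = S
  intro hpos k1 k2
  have hS : S ≠ 0 := by rintro rfl; simp at hpos
  have hc : c1 ≠ 0 := by rintro rfl; simp at hpos
  have hc2 : c2 = - n * c1 := by
    apply mul_left_cancel₀ hS
    linarith
  rw [hc2] at k1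
  apply mul_right_cancel₀ hc
  linarith

/-- For `X` symmetric and trace free and `f, h` smooth `0`-homogeneous functions on `ℝⁿ \ {0}`:
`∫_{S^{n-1}} (⟨∇f(y), Xy⟩ h(y) + f(y) ⟨∇h(y), Xy⟩) dσ(y) = n ∫_{S^{n-1}} ⟨Xy,y⟩ f(y) h(y) dσ(y)`. -/
theorem integral_lie_derivative_product (n : ℕ) (hn : 2 ≤ n)
    (X : Matrix (Fin n) (Fin n) ℝ) (hX : X.IsSymm) (htr : X.trace = 0)
    (f h : EuclideanSpace ℝ (Fin n) → ℝ)
    (hf : ContDiffOn ℝ (⊤ : ℕ∞) f {(0 : EuclideanSpace ℝ (Fin n))}ᶜ)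
    (hh : ContDiffOn ℝ (⊤ : ℕ∞) h {(0 : EuclideanSpace ℝ (Fin n))}ᶜ)
    (hfhom : ∀ t : ℝ, 0 < t → ∀ y : EuclideanSpace ℝ (Fin n), y ≠ 0 → f (t • y) = f y)
    (hhhom : ∀ t : ℝ, 0 < t → ∀ y : EuclideanSpace ℝ (Fin n), y ≠ 0 → h (t • y) = h y) :
    ∫ y : Metric.sphere (0 : EuclideanSpace ℝ (Fin n)) 1,
        (⟪gradient f y, mulVecE X y⟫ * h y + f y * ⟪gradient h y, mulVecE X y⟫)
        ∂(sphereMeasure n)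
      = n * ∫ y : Metric.sphere (0 : EuclideanSpace ℝ (Fin n)) 1,
          ⟪mulVecE X y, (y : EuclideanSpace ℝ (Fin n))⟫ * f y * h y ∂(sphereMeasure n) := by
  have hne : ∀ y : Metric.sphere (0 : EuclideanSpace ℝ (Fin n)) 1,
      (y : EuclideanSpace ℝ (Fin n)) ≠ 0 := fun y => ne_zero_of_mem_unit_sphere y
  have hf1 : ContDiffOn ℝ 1 f {(0 : EuclideanSpace ℝ (Fin n))}ᶜ :=
    hf.of_le (by exact_mod_cast le_top)
  have hh1 : ContDiffOn ℝ 1 h {(0 : EuclideanSpace ℝ (Fin n))}ᶜ :=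
    hh.of_le (by exact_mod_cast le_top)
  have hm := main_lemma hn X htr (fun y => f y * h y) (hf1.mul hh1)
    (fun t ht y hy => by rw [hfhom t ht y hy, hhhom t ht y hy])
  simp only [← mul_assoc] at hm
  rw [← hm]
  congr 1
  funext y
  have d : ∀ g : EuclideanSpace ℝ (Fin n) → ℝ,
      ContDiffOn ℝ 1 g {(0 : EuclideanSpace ℝ (Fin n))}ᶜ →
      DifferentiableAt ℝ g y := fun g hg =>
    (hg.contDiffAt (isOpen_compl_singleton.mem_nhds (hne y))).differentiableAt one_ne_zero
  have hgr : ∀ g : EuclideanSpace ℝ (Fin n) → ℝ, ∀ v : EuclideanSpace ℝ (Fin n),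
      ⟪gradient g y, v⟫ = fderiv ℝ g y v := by
    intro g v
    rw [← toDual_gradient]
    rfl
  rw [hgr, hgr, fderiv_fun_mul (d f hf1) (d h hh1)]
  simp
  ring
end

section
/- Let n ≥ 2 and s ≥ 0 be integers, let f be a harmonic homogeneous polynomial of degree s on ℝⁿ, let h be a harmonic homogeneous polynomial of degree s+2 on ℝⁿ, and let X be a symmetric real n×n matrix with trace 0. Then ∫_{S^{n−1}} f(y) · ⟨Xy, ∇h(y)⟩ dσ(y) = (n + 2s + 2) · ∫_{S^{n−1}} ⟨Xy, y⟩ · f(y) · h(y) dσ(y). -/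
open MeasureTheory
open scoped RealInnerProductSpace

open MvPolynomial in
theorem hasFDerivAt_ev {n : ℕ} (p : MvPolynomial (Fin n) ℝ) (y : EuclideanSpace ℝ (Fin n)) :
    HasFDerivAt (fun z : EuclideanSpace ℝ (Fin n) => eval (fun i => z i) p)
      (∑ i, eval (fun i => y i) (pderiv i p) • (EuclideanSpace.proj i : EuclideanSpace ℝ (Fin n) →L[ℝ] ℝ)) y := by
  induction p using MvPolynomial.induction_on with
  | C a =>
    simp only [eval_C, pderiv_C, map_zero, zero_smul, Finset.sum_const_zero]
    exact hasFDerivAt_const _ _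
  | add p q hp hq =>
    simp only [map_add, add_smul, Finset.sum_add_distrib]
    exact hp.add hq
  | mul_X p j hp =>
    have h1 : HasFDerivAt (fun z : EuclideanSpace ℝ (Fin n) => z j)
      (EuclideanSpace.proj j : EuclideanSpace ℝ (Fin n) →L[ℝ] ℝ) y :=
      (EuclideanSpace.proj j : EuclideanSpace ℝ (Fin n) →L[ℝ] ℝ).hasFDerivAt
    have := hp.mul h1
    simp only [map_mul, eval_X]
    refine this.congr_fderiv ?_
    ext v
    simp [pderiv_X, Derivation.leibniz, Pi.single_apply, add_mul, Finset.sum_add_distrib, Finset.mul_sum, apply_ite, ite_mul]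
    refine Finset.sum_congr rfl fun i _ => ?_
    ring

open MvPolynomial in
theorem fderiv_ev {n : ℕ} (p : MvPolynomial (Fin n) ℝ) (y : EuclideanSpace ℝ (Fin n)) (j : Fin n) :
    fderiv ℝ (fun z : EuclideanSpace ℝ (Fin n) => eval (fun i => z i) p) y (EuclideanSpace.single j 1)
      = eval (fun i => y i) (pderiv j p) := by
  rw [(hasFDerivAt_ev p y).fderiv]
  simp [Pi.single_apply]

theorem integrable_pow_gauss (d : ℕ) :
    Integrable (fun x : ℝ => x ^ d * Real.exp (-(1/2) * x ^ 2)) := by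
  have := integrable_rpow_mul_exp_neg_mul_sq (b := 1/2) (by norm_num) (s := (d:ℝ))
    (by have : (0:ℝ) ≤ d := Nat.cast_nonneg d
        linarith)
  simpa using this

open MvPolynomial in
theorem integrable_ev_gauss {n : ℕ} (p : MvPolynomial (Fin n) ℝ) :
    Integrable (fun y : EuclideanSpace ℝ (Fin n) =>
      eval (fun i => y i) p * Real.exp (-(1/2) * ‖y‖ ^ 2)) := by
  induction p using MvPolynomial.induction_on' with
  | monomial d a =>
    rw [← (PiLp.volume_preserving_toLp (Fin n)).integrable_comp_emb
      (MeasurableEquiv.toLp 2 _).measurableEmbedding]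
    have h := Integrable.fintype_prod (μ := fun _ : Fin n => (volume : Measure ℝ))
      (f := fun (i : Fin n) (x : ℝ) => x ^ (d i) * Real.exp (-(1/2) * x ^ 2))
      (fun i => integrable_pow_gauss (d i))
    refine (h.const_mul a).congr (Filter.Eventually.of_forall fun x => ?_)
    simp only [Function.comp, eval_monomial, EuclideanSpace.norm_sq_eq, Finset.mul_sum, Real.exp_sum,
      Finset.prod_mul_distrib, Real.norm_eq_abs, sq_abs]
    rw [Finsupp.prod_fintype _ _ (by simp)]
    ring
  | add p q hp hq =>
    simp only [map_add, add_mul]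
    exact hp.add hq

open MvPolynomial in
/-- Gaussian integral of a polynomial. -/
noncomputable def gaussE (n : ℕ) : MvPolynomial (Fin n) ℝ →ₗ[ℝ] ℝ where
  toFun p := ∫ y : EuclideanSpace ℝ (Fin n), eval (fun i => y i) p * Real.exp (-(1/2) * ‖y‖ ^ 2)
  map_add' p q := by
    simp only [map_add, add_mul]
    exact integral_add (integrable_ev_gauss p) (integrable_ev_gauss q)
  map_smul' a p := by
    simp only [smul_eval, mul_assoc, RingHom.id_apply, smul_eq_mul]
    exact integral_const_mul _ _

theorem hasFDerivAt_gauss {n : ℕ} (y : EuclideanSpace ℝ (Fin n)) :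
    HasFDerivAt (fun z : EuclideanSpace ℝ (Fin n) => Real.exp (-(1/2) * ‖z‖ ^ 2))
      (-(Real.exp (-(1/2) * ‖y‖ ^ 2) • innerSL ℝ y)) y := by
  have h := ((hasStrictFDerivAt_norm_sq y).hasFDerivAt.const_mul (-(1/2) : ℝ)).exp
  refine h.congr_fderiv ?_
  ext v
  simp

open MvPolynomial in
theorem gaussE_X_mul {n : ℕ} (i : Fin n) (p : MvPolynomial (Fin n) ℝ) :
    gaussE n (X i * p) = gaussE n (pderiv i p) := by
  have hG : ∀ y : EuclideanSpace ℝ (Fin n), fderiv ℝ (fun z : EuclideanSpace ℝ (Fin n) => Real.exp (-(1/2) * ‖z‖ ^ 2)) y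
      (EuclideanSpace.single i 1) = - (y i * Real.exp (-(1/2) * ‖y‖ ^ 2)) := by
    intro y
    rw [(hasFDerivAt_gauss y).fderiv]
    simp [EuclideanSpace.inner_single_right, mul_comm]
  have h := integral_mul_fderiv_eq_neg_fderiv_mul_of_integrable (μ := (volume : Measure (EuclideanSpace ℝ (Fin n))))
    (f := fun z : EuclideanSpace ℝ (Fin n) => eval (fun i => z i) p)
    (g := fun z : EuclideanSpace ℝ (Fin n) => Real.exp (-(1/2) * ‖z‖ ^ 2))
    (v := EuclideanSpace.single i 1)
    (by simp only [fderiv_ev]; exact integrable_ev_gauss _)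
    (by
      simp only [hG]
      refine (integrable_ev_gauss (X i * p)).neg.congr (Filter.Eventually.of_forall fun y => ?_)
      simp; ring)
    (integrable_ev_gauss p)
    (fun x _ => (hasFDerivAt_ev p x).differentiableAt)
    (fun x _ => (hasFDerivAt_gauss x).differentiableAt)
  simp only [hG, fderiv_ev] at h
  have h2 : ∫ y : EuclideanSpace ℝ (Fin n), eval (fun i => y i) p * -(y i * Real.exp (-(1/2) * ‖y‖ ^ 2))
     = - gaussE n (X i * p) := by
    change _ = - ∫ y : EuclideanSpace ℝ (Fin n), _
    rw [← integral_neg]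
    congr 1; ext y; simp; ring
  rw [h2] at h
  exact neg_injective h

open MvPolynomial in
theorem pderiv_pderiv_comm' {n : ℕ} (i j : Fin n) (p : MvPolynomial (Fin n) ℝ) :
    pderiv i (pderiv j p) = pderiv j (pderiv i p) := by
  have h : ⁅pderiv (R := ℝ) i, pderiv (R := ℝ) j⁆ = 0 := by
    apply MvPolynomial.derivation_ext
    intro k
    rw [Derivation.commutator_apply]
    simp [pderiv_X, Pi.single_apply, apply_ite]
  have h2 := congrArg (fun D => D p) h
  simp only [Derivation.commutator_apply, Derivation.coe_zero, Pi.zero_apply] at h2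
  exact sub_eq_zero.1 h2

open MvPolynomial in
theorem gaussE_harmonic {n : ℕ} (m : ℕ) : ∀ (d : ℕ) (g h : MvPolynomial (Fin n) ℝ), d < m →
    g.IsHomogeneous d → h.IsHomogeneous m → ∑ i, pderiv i (pderiv i h) = 0 →
    gaussE n (g * h) = 0 := by
  induction m with
  | zero => intro d g h hd; omega
  | succ m ih =>
    intro d g h hd hg hh hΔ
    have h1 : ((m + 1 : ℕ) : ℝ) * gaussE n (g * h) = 0 := by
      have e : ((m + 1 : ℕ) : ℝ) • (g * h) = ∑ i, X i * (g * pderiv i h) := by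
        have := hh.sum_X_mul_pderiv
        calc _ = g * ((m + 1 : ℕ) • h) := by
              rw [Nat.cast_smul_eq_nsmul, mul_smul_comm]
          _ = _ := by
              rw [← this, Finset.mul_sum]
              exact Finset.sum_congr rfl fun i _ => by ring
      rw [← smul_eq_mul, ← map_smul, e, map_sum]
      simp only [gaussE_X_mul, Derivation.leibniz, map_add, Finset.sum_add_distrib]
      rw [← map_sum]
      simp only [smul_eq_mul, ← Finset.mul_sum, hΔ, mul_zero, map_zero, zero_add]
      refine Finset.sum_eq_zero fun i _ => ?_
      rw [mul_comm]
      rcases Nat.eq_zero_or_pos d with rfl | hd0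
      · rw [← totalDegree_zero_iff_isHomogeneous, totalDegree_eq_zero_iff_eq_C] at hg
        rw [hg, pderiv_C]; simp
      · refine ih (d - 1) _ _ (by omega) hg.pderiv hh.pderiv ?_
        have e2 : ∀ j, pderiv j (pderiv j (pderiv i h)) = pderiv i (pderiv j (pderiv j h)) := by
          intro j
          rw [pderiv_pderiv_comm' j i h, pderiv_pderiv_comm' j i]
        simp only [e2]
        rw [← map_sum, hΔ, map_zero]
    rcases mul_eq_zero.1 h1 with h2 | h2
    · exact absurd h2 (by positivity)
    · exact h2

/-- Radial Gaussian moment. -/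
noncomputable def radJ (n d : ℕ) : ℝ :=
  ∫ x in Set.Ioi (0 : ℝ), x ^ (n - 1) * (x ^ d * Real.exp (-(1/2) * x ^ 2))

theorem radJ_eq (n d : ℕ) (hn : 2 ≤ n) : radJ n d =
    (1/2 : ℝ) ^ (-((n : ℝ) + d) / 2) * (1 / 2) * Real.Gamma (((n : ℝ) + d) / 2) := by
  have hq : (((n - 1 + d : ℕ) : ℝ)) + 1 = (n : ℝ) + d := by
    rw [Nat.cast_add, Nat.cast_sub (by omega)]; push_cast; ring
  have h := integral_rpow_mul_exp_neg_mul_rpow (p := 2) (q := ((n - 1 + d : ℕ) : ℝ)) (b := 1/2)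
    (by norm_num) (by have := Nat.cast_nonneg (α := ℝ) (n - 1 + d); linarith) (by norm_num)
  rw [hq] at h
  rw [← h, radJ]
  congr 1; ext x
  rw [Real.rpow_natCast, Real.rpow_two, pow_add]; ring

theorem radJ_succ (n d : ℕ) (hn : 2 ≤ n) : radJ n (d + 2) = ((n : ℝ) + d) * radJ n d := by
  have hpos : (0 : ℝ) < (n : ℝ) + d := by positivity
  rw [radJ_eq n _ hn, radJ_eq n _ hn]
  have e1 : ((n : ℝ) + (d + 2 : ℕ)) / 2 = ((n : ℝ) + d) / 2 + 1 := by push_cast; ring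
  have e2 : -((n : ℝ) + (d + 2 : ℕ)) / 2 = -((n : ℝ) + d) / 2 + (-1) := by push_cast; ring
  rw [e1, e2, Real.Gamma_add_one (by positivity), Real.rpow_add (by norm_num), Real.rpow_neg_one]
  ring

theorem radJ_pos (n d : ℕ) (hn : 2 ≤ n) : 0 < radJ n d := by
  rw [radJ_eq n _ hn]
  have : 0 < Real.Gamma (((n : ℝ) + d) / 2) := Real.Gamma_pos_of_pos (by positivity)
  positivity

open MvPolynomial in
theorem eval_smul_of_hom {n d : ℕ} {p : MvPolynomial (Fin n) ℝ} (hp : p.IsHomogeneous d)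
    (t : ℝ) (y : Fin n → ℝ) : eval (fun i => t * y i) p = t ^ d * eval y p := by
  rw [eval_eq, eval_eq, Finset.mul_sum]
  refine Finset.sum_congr rfl fun m hm => ?_
  have hd : ∑ i ∈ m.support, m i = d := by
    have := hp (mem_support_iff.1 hm)
    simpa [Finsupp.weight_apply, Finsupp.sum] using this
  simp only [mul_pow, Finset.prod_mul_distrib, Finset.prod_pow_eq_pow_sum, hd]
  ring

open MvPolynomial in
theorem gaussE_polar {n d : ℕ} (hn : 2 ≤ n) {p : MvPolynomial (Fin n) ℝ} (hp : p.IsHomogeneous d) :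
    gaussE n p = (∫ y : Metric.sphere (0 : EuclideanSpace ℝ (Fin n)) 1,
      eval (fun i => (y : EuclideanSpace ℝ (Fin n)) i) p ∂(sphereMeasure n)) * radJ n d := by
  haveI : Nonempty (Fin n) := ⟨⟨0, by omega⟩⟩
  let μ : Measure (EuclideanSpace ℝ (Fin n)) := volume
  let F : EuclideanSpace ℝ (Fin n) → ℝ := fun y =>
    eval (fun i => y i) p * Real.exp (-(1/2) * ‖y‖ ^ 2)
  calc gaussE n p = ∫ x, F x ∂μ := rfl
    _ = ∫ x : ({(0)}ᶜ : Set (EuclideanSpace ℝ (Fin n))), F x ∂(μ.comap (↑)) := by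
      rw [integral_subtype_comap (measurableSet_singleton _).compl F,
        restrict_compl_singleton]
    _ = ∫ x, F ((homeomorphUnitSphereProd (EuclideanSpace ℝ (Fin n))).symm x)
          ∂μ.toSphere.prod (.volumeIoiPow (Module.finrank ℝ (EuclideanSpace ℝ (Fin n)) - 1)) := by
      have := μ.measurePreserving_homeomorphUnitSphereProd.integral_comp
        (Homeomorph.measurableEmbedding _)
        (fun x => F ((homeomorphUnitSphereProd (EuclideanSpace ℝ (Fin n))).symm x))
      rw [← this]
      simp only [Homeomorph.symm_apply_apply]
    _ = ∫ x : Metric.sphere (0 : EuclideanSpace ℝ (Fin n)) 1 × Set.Ioi (0 : ℝ),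
          eval (fun i => (x.1 : EuclideanSpace ℝ (Fin n)) i) p *
            ((x.2 : ℝ) ^ d * Real.exp (-(1/2) * (x.2 : ℝ) ^ 2))
          ∂μ.toSphere.prod (.volumeIoiPow (n - 1)) := by
      rw [finrank_euclideanSpace_fin]
      refine integral_congr_ae (Filter.Eventually.of_forall fun x => ?_)
      have hr : (0 : ℝ) < x.2 := x.2.2
      simp only [F, homeomorphUnitSphereProd_symm_apply_coe, PiLp.smul_apply, smul_eq_mul,
        eval_smul_of_hom hp, norm_smul, Real.norm_eq_abs, abs_of_pos hr]
      rw [mem_sphere_zero_iff_norm.1 x.1.2]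
      ring_nf
    _ = _ := by
      rw [integral_prod_mul (μ := μ.toSphere)
        (fun y : Metric.sphere (0 : EuclideanSpace ℝ (Fin n)) 1 =>
          eval (fun i => (y : EuclideanSpace ℝ (Fin n)) i) p)
        (fun r : Set.Ioi (0 : ℝ) => (r : ℝ) ^ d * Real.exp (-(1/2) * (r : ℝ) ^ 2))]
      congr 1
      simp only [Measure.volumeIoiPow, ENNReal.ofReal]
      rw [integral_withDensity_eq_integral_smul,
        integral_subtype_comap measurableSet_Ioi fun a : ℝ ↦ Real.toNNReal (a ^ (n - 1)) •
          (a ^ d * Real.exp (-(1/2) * a ^ 2)),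
        radJ, setIntegral_congr_fun measurableSet_Ioi fun x hx ↦ ?_]
      · simp only [NNReal.smul_def]
        rw [Real.coe_toNNReal _ (pow_nonneg (le_of_lt hx) _), smul_eq_mul]
      · exact (measurable_subtype_coe.pow_const _).real_toNNReal

open MvPolynomial in
theorem exists_hom {n s : ℕ} {f : EuclideanSpace ℝ (Fin n) → ℝ} (hf : IsHarmonicHomogeneous n s f) :
    ∃ q : MvPolynomial (Fin n) ℝ, q.IsHomogeneous s ∧ ∑ i, pderiv i (pderiv i q) = 0 ∧
      f = fun y => eval (fun i => y i) q := by
  obtain ⟨⟨p, hp⟩, hhom, hharm⟩ := hf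
  have key : ∀ y, f y = eval (fun i => y i) (homogeneousComponent s p) := by
    intro y
    let N := p.totalDegree + 1
    let P : Polynomial ℝ := ∑ k ∈ Finset.range N,
      Polynomial.C (eval (fun i => y i) (homogeneousComponent k p)) * Polynomial.X ^ k
    let Q : Polynomial ℝ := Polynomial.C (f y) * Polynomial.X ^ s
    have hPQ : P = Q := by
      refine Polynomial.eq_of_infinite_eval_eq P Q ((Set.Ioi_infinite (0 : ℝ)).mono ?_)
      intro t ht
      have h1 := hhom t ht y
      rw [hp (t • y)] at h1
      rw [← sum_homogeneousComponent p, map_sum] at h1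
      simp only [PiLp.smul_apply, smul_eq_mul,
        eval_smul_of_hom (homogeneousComponent_isHomogeneous _ p)] at h1
      simp only [Set.mem_setOf_eq, P, Q, Polynomial.eval_finset_sum, Polynomial.eval_mul,
        Polynomial.eval_C, Polynomial.eval_pow, Polynomial.eval_X]
      rw [mul_comm (f y), ← h1]
      exact Finset.sum_congr rfl fun k _ => mul_comm _ _
    have h2 := congrArg (fun R => Polynomial.coeff R s) hPQ
    simp only [P, Q, Polynomial.finset_sum_coeff, Polynomial.coeff_C_mul, Polynomial.coeff_X_pow,
      if_true, mul_one, mul_ite, mul_zero, Finset.sum_ite_eq, Finset.mem_range] at h2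
    rw [← h2]
    split_ifs with h
    · rfl
    · rw [homogeneousComponent_eq_zero _ _ (by omega), map_zero]
  have hfe : f = fun y => eval (fun i => y i) (homogeneousComponent s p) := funext key
  refine ⟨homogeneousComponent s p, homogeneousComponent_isHomogeneous _ _, ?_, hfe⟩
  apply MvPolynomial.funext
  intro x
  have := hharm (WithLp.toLp 2 x)
  rw [hfe] at this
  simp only [secondPartialDeriv, fderiv_ev] at this
  rw [map_sum, map_zero]
  exact this

open MvPolynomial in
theorem poly_identity {n s : ℕ} {f h : MvPolynomial (Fin n) ℝ} (hf : f.IsHomogeneous s)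
    (hh : h.IsHomogeneous (s + 2)) (hΔ : ∑ i, pderiv i (pderiv i h) = 0)
    (A : Matrix (Fin n) (Fin n) ℝ) (htr : A.trace = 0) :
    gaussE n (∑ i, X i * ((∑ j, C (A i j) * X j) * f * h)) =
      gaussE n (f * ∑ i, (∑ j, C (A i j) * X j) * pderiv i h) := by
  set V : Fin n → MvPolynomial (Fin n) ℝ := fun i => ∑ j, C (A i j) * X j with hV
  have hdV : ∀ i, pderiv i (V i) = C (A i i) := by
    intro i
    simp [hV, pderiv_X, Pi.single_apply]
  have hVh : ∀ i, (V i).IsHomogeneous 1 := fun i =>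
    IsHomogeneous.sum _ _ _ fun j _ => by
      simpa using (isHomogeneous_C (Fin n) (A i j)).mul (isHomogeneous_X ℝ j)
  have e : ∑ i, pderiv i (V i * f * h) = (∑ i, C (A i i)) * (f * h)
      + (∑ i, V i * pderiv i f) * h + f * ∑ i, V i * pderiv i h := by
    rw [Finset.sum_mul, Finset.sum_mul, Finset.mul_sum, ← Finset.sum_add_distrib,
      ← Finset.sum_add_distrib]
    refine Finset.sum_congr rfl fun i _ => ?_
    simp only [Derivation.leibniz, hdV, smul_eq_mul]
    ring
  have h0 : (∑ i, C (A i i) : MvPolynomial (Fin n) ℝ) = 0 := by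
    rw [← map_sum]
    have : ∑ i, A i i = 0 := htr
    rw [this, map_zero]
  have h1 : gaussE n ((∑ i, V i * pderiv i f) * h) = 0 := by
    rcases Nat.eq_zero_or_pos s with rfl | hs
    · rw [← totalDegree_zero_iff_isHomogeneous, totalDegree_eq_zero_iff_eq_C] at hf
      rw [hf]; simp
    · refine gaussE_harmonic (s + 2) s _ _ (by omega) ?_ hh hΔ
      refine IsHomogeneous.sum _ _ _ fun i _ => ?_
      have := (hVh i).mul (hf.pderiv (i := i))
      rwa [show 1 + (s - 1) = s by omega] at this
  rw [map_sum]
  simp only [gaussE_X_mul]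
  rw [← map_sum, e, map_add, map_add, h1, h0, zero_mul, map_zero]
  ring

/-- For harmonic homogeneous polynomials `f` of degree `s`, `h` of degree `s+2`, and a
trace-free symmetric matrix `X`:
`∫_{S^{n-1}} f(y) ⟨Xy, ∇h(y)⟩ dσ(y) = (n+2s+2) ∫_{S^{n-1}} ⟨Xy,y⟩ f(y) h(y) dσ(y)`. -/
theorem integral_f_hatXh (n s : ℕ) (hn : 2 ≤ n)
    (f h : EuclideanSpace ℝ (Fin n) → ℝ)
    (hf : IsHarmonicHomogeneous n s f) (hh : IsHarmonicHomogeneous n (s + 2) h)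
    (X : Matrix (Fin n) (Fin n) ℝ) (hX : X.IsSymm) (htr : X.trace = 0) :
    ∫ y : Metric.sphere (0 : EuclideanSpace ℝ (Fin n)) 1,
        f y * ⟪mulVecE X y, gradient h y⟫ ∂(sphereMeasure n)
      = ((n : ℝ) + 2 * s + 2) * ∫ y : Metric.sphere (0 : EuclideanSpace ℝ (Fin n)) 1,
          ⟪mulVecE X y, (y : EuclideanSpace ℝ (Fin n))⟫ * f y * h y ∂(sphereMeasure n) := by
  obtain ⟨p, hp, -, hfp⟩ := exists_hom hf
  obtain ⟨q, hq, hΔ, hhq⟩ := exists_hom hh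
  have key := poly_identity hp hq hΔ X htr
  have hV : ∀ i, (∑ j, MvPolynomial.C (X i j) * MvPolynomial.X j :
      MvPolynomial (Fin n) ℝ).IsHomogeneous 1 := fun i =>
    MvPolynomial.IsHomogeneous.sum _ _ _ fun j _ => by
      simpa using (MvPolynomial.isHomogeneous_C (Fin n) (X i j)).mul
        (MvPolynomial.isHomogeneous_X ℝ j)
  have hA : (∑ i, MvPolynomial.X i * ((∑ j, MvPolynomial.C (X i j) * MvPolynomial.X j) * p * q) :
      MvPolynomial (Fin n) ℝ).IsHomogeneous (2 * s + 2 + 2) := by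
    refine MvPolynomial.IsHomogeneous.sum _ _ _ fun i _ => ?_
    have := (MvPolynomial.isHomogeneous_X ℝ i).mul (((hV i).mul hp).mul hq)
    rwa [show 1 + (1 + s + (s + 2)) = 2 * s + 2 + 2 by omega] at this
  have hB : (p * ∑ i, (∑ j, MvPolynomial.C (X i j) * MvPolynomial.X j) * MvPolynomial.pderiv i q :
      MvPolynomial (Fin n) ℝ).IsHomogeneous (2 * s + 2) := by
    have := hp.mul (MvPolynomial.IsHomogeneous.sum Finset.univ
      (fun i => (∑ j, MvPolynomial.C (X i j) * MvPolynomial.X j) * MvPolynomial.pderiv i q)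
      (s + 2) fun i _ => by
        have := (hV i).mul (hq.pderiv (i := i))
        rwa [show 1 + (s + 2 - 1) = s + 2 by omega] at this)
    rwa [show s + (s + 2) = 2 * s + 2 by omega] at this
  rw [gaussE_polar hn hA, gaussE_polar hn hB, radJ_succ n _ hn] at key
  have hJ := radJ_pos n (2 * s + 2) hn
  have eA : ∀ y : EuclideanSpace ℝ (Fin n), ⟪mulVecE X y, y⟫ * f y * h y =
      MvPolynomial.eval (fun i => y i)
        (∑ i, MvPolynomial.X i * ((∑ j, MvPolynomial.C (X i j) * MvPolynomial.X j) * p * q)) := by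
    intro y
    simp only [hfp, hhq, mulVecE, PiLp.inner_apply, map_sum, map_mul, MvPolynomial.eval_X,
      MvPolynomial.eval_C]
    rw [Finset.sum_mul, Finset.sum_mul]
    refine Finset.sum_congr rfl fun i _ => ?_
    simp [Matrix.mulVec, dotProduct]
    ring
  have eB : ∀ y : EuclideanSpace ℝ (Fin n), f y * ⟪mulVecE X y, gradient h y⟫ =
      MvPolynomial.eval (fun i => y i)
        (p * ∑ i, (∑ j, MvPolynomial.C (X i j) * MvPolynomial.X j) * MvPolynomial.pderiv i q) := by
    intro y
    rw [real_inner_comm, gradient, InnerProductSpace.toDual_symm_apply, hfp, hhq,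
      (hasFDerivAt_ev q y).fderiv]
    simp [mulVecE, Matrix.mulVec, dotProduct, mul_comm]
  simp only [eA, eB]
  apply mul_right_cancel₀ hJ.ne'
  rw [← key]
  push_cast
  ring
end

section
/- Let s and m be integers with 1 ≤ m ≤ ⌊s/2⌋, and let ν be a real number with ν/2 + s − 2m − 1 > 0. Then Σ_{j=0}^{m} (−1)^j · binom(m,j) · (ν/2 + s − 2j − 1) · Γ(ν/2 + s − m − j − 1) / Γ(ν/2 + s − j) = 0. (For m = 0 the corresponding sum equals 1.) -/
theorem gamma_partial_aux (k : ℕ) (a : ℝ) (ha : 0 < a - 2 * (k + 1)) (n : ℕ) (hn : n ≤ k + 1) :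
    ∑ j ∈ Finset.range (n + 1),
        (-1 : ℝ) ^ j * (Nat.choose (k + 1) j : ℝ) * (a - 2 * j) *
          Real.Gamma (a - (k + 1) - j) / Real.Gamma (a + 1 - j) =
      (-1 : ℝ) ^ n * (Nat.choose k n : ℝ) * Real.Gamma (a - (k + 1) - n) / Real.Gamma (a - n) := by
  induction n with
  | zero =>
    have hk : (0 : ℝ) ≤ k := Nat.cast_nonneg k
    have h0 : 0 < a := by linarith
    have h1 := (Real.Gamma_pos_of_pos h0).ne'
    simp only [zero_add, Finset.sum_range_one, pow_zero, Nat.choose_zero_right, Nat.cast_one,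
      Nat.cast_zero, mul_zero, sub_zero, one_mul]
    rw [Real.Gamma_add_one h0.ne']
    have h2 := h0.ne'
    field_simp
  | succ n ih =>
    rw [Finset.sum_range_succ, ih (by omega)]
    have hnk : (n : ℝ) ≤ k := by exact_mod_cast (by omega : n ≤ k)
    have hk : (0 : ℝ) ≤ k := Nat.cast_nonneg k
    have p1 : 0 < a - (k + 1) - (n + 1) := by linarith
    have p2 : 0 < a - (n + 1) := by linarith
    have e1 : Real.Gamma (a - (k + 1) - n) =
        (a - (k + 1) - (n + 1)) * Real.Gamma (a - (k + 1) - (n + 1)) := by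
      rw [← Real.Gamma_add_one p1.ne']; congr 1; ring
    have e2 : Real.Gamma (a - n) = (a - (n + 1)) * Real.Gamma (a - (n + 1)) := by
      rw [← Real.Gamma_add_one p2.ne']; congr 1; ring
    have e3 : a + 1 - ((n : ℝ) + 1) = a - n := by ring
    have hc : (Nat.choose k (n + 1) : ℝ) * (n + 1) = Nat.choose k n * (k - n) := by
      have := Nat.choose_succ_right_eq k n
      rw [← Nat.cast_sub (by omega : n ≤ k)]
      exact_mod_cast this
    push_cast [Nat.choose_succ_succ]
    rw [e3, e1, e2]
    have g := (Real.Gamma_pos_of_pos p2).ne'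
    have q := p2.ne'
    generalize Real.Gamma (a - (k + 1) - (n + 1)) = X at *
    generalize Real.Gamma (a - (n + 1)) = Y at *
    rw [← add_div, div_eq_div_iff (mul_ne_zero q g) g]
    rw [pow_succ]
    linear_combination ((-1 : ℝ) ^ n * X * Y) * hc

/-- Zeilberger-type Gamma identity: for integers `1 ≤ m ≤ ⌊s/2⌋` and real `ν` with
`ν/2 + s - 2m - 1 > 0`,
`∑_{j=0}^{m} (-1)^j C(m,j) (ν/2+s-2j-1) Γ(ν/2+s-m-j-1)/Γ(ν/2+s-j) = 0`. -/
theorem gamma_sum_eq_zero (s m : ℕ) (hm1 : 1 ≤ m) (hm : m ≤ s / 2) (ν : ℝ)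
    (hν : 0 < ν / 2 + s - 2 * m - 1) :
    ∑ j ∈ Finset.range (m + 1),
        (-1 : ℝ) ^ j * (Nat.choose m j : ℝ) * (ν / 2 + s - 2 * j - 1) *
          Real.Gamma (ν / 2 + s - m - j - 1) / Real.Gamma (ν / 2 + s - j) = 0 := by
  obtain ⟨k, rfl⟩ : ∃ k, m = k + 1 := ⟨m - 1, by omega⟩
  push_cast at hν
  have h := gamma_partial_aux k (ν / 2 + s - 1) (by linarith) (k + 1) le_rfl
  rw [Nat.choose_succ_self] at h
  simp only [Nat.cast_zero, mul_zero, zero_mul, zero_div] at h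
  rw [← h]
  refine Finset.sum_congr rfl fun j _ => ?_
  have a1 : ν / 2 + (s : ℝ) - 2 * j - 1 = ν / 2 + s - 1 - 2 * j := by ring
  have a2 : ν / 2 + (s : ℝ) - ((k + 1 : ℕ) : ℝ) - j - 1 = ν / 2 + s - 1 - (k + 1) - j := by
    push_cast; ring
  have a3 : ν / 2 + (s : ℝ) - j = ν / 2 + s - 1 + 1 - j := by ring
  rw [a1, a2, a3]
end

section
/- Let s ≥ 0 and m be integers with 0 ≤ m ≤ ⌊s/2⌋, and let ν and k be real numbers such that (k+s)/2 > m, (ν−k+s)/2 > m, and ν/2 + s − 2m − 1 > 0. Then Σ_{j=0}^{m} binom(m,j) · (ν/2 + s − 2j − 1) · Γ((k+s)/2 − j) · Γ(ν/2 + s − j − m − 1) / (Γ((ν−k+s)/2 − j) · Γ(ν/2 + s − j)) = Γ((k+s)/2 − m) / Γ((ν−k+s)/2). -/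
noncomputable def gsfT (a b : ℝ) (m j : ℕ) : ℝ :=
  (Nat.choose m j : ℝ) * (a + b - 2 * j - 1) * Real.Gamma (a - j) *
    Real.Gamma (a + b - j - m - 1) / (Real.Gamma (b - j) * Real.Gamma (a + b - j))

noncomputable def gsfG (a b : ℝ) (m : ℕ) : ℕ → ℝ
  | 0 => 0
  | j + 1 => -((Nat.choose m j : ℝ) * Real.Gamma (a - j) * Real.Gamma (a + b - j - m - 2)
      * (b - j - 1) / (Real.Gamma (b - j) * Real.Gamma (a + b - j - 1)))

lemma gsf_rec {x y : ℝ} (h : 0 < x) (hy : y = x + 1) : Real.Gamma y = x * Real.Gamma x := by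
  rw [hy, Real.Gamma_add_one h.ne']

lemma gsf_step (a b : ℝ) (m j : ℕ) (hj : j ≤ m + 1) (h1 : (m : ℝ) + 1 < a)
    (h2 : (m : ℝ) + 1 < b) (h3 : 0 < a + b - 2 * (m + 1) - 1) :
    (a - m - 1) * gsfT a b (m + 1) j - gsfT a b m j = gsfG a b m (j + 1) - gsfG a b m j := by
  have hj' : (j : ℝ) ≤ m + 1 := by exact_mod_cast hj
  have hm0 : (0 : ℝ) ≤ m := Nat.cast_nonneg m
  have hD0 : 0 < a + b - j - m - 2 := by linarith
  have hE0 : 0 < a + b - j - 1 := by linarith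
  have hB0 : 0 < b - j := by linarith
  have hA0 : 0 < a - j := by linarith
  have hD : Real.Gamma (a + b - j - m - 1)
      = (a + b - j - m - 2) * Real.Gamma (a + b - j - m - 2) := gsf_rec hD0 (by ring)
  have hE : Real.Gamma (a + b - j) = (a + b - j - 1) * Real.Gamma (a + b - j - 1) :=
    gsf_rec hE0 (by ring)
  have hD' : Real.Gamma (a + b - j - ((m + 1 : ℕ) : ℝ) - 1) = Real.Gamma (a + b - j - m - 2) := by
    congr 1; push_cast; ring
  have hB1 := (Real.Gamma_pos_of_pos hB0).ne'
  have hE1 := (Real.Gamma_pos_of_pos hE0).ne'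
  cases j with
  | zero =>
    simp only [gsfT, gsfG, hD', hD, hE]
    simp only [Nat.choose_zero_right]
    generalize Real.Gamma (a + b - (0 : ℕ) - m - 2) = D at *
    generalize Real.Gamma (a + b - (0 : ℕ) - 1) = E at *
    generalize Real.Gamma (b - (0 : ℕ)) = B at *
    generalize Real.Gamma (a - (0 : ℕ)) = A at *
    have hE2 := hE0.ne'
    push_cast at *
    simp only [sub_zero, mul_zero] at *
    field_simp
    ring
  | succ i =>
    have hA' : Real.Gamma (a - i) = (a - (i + 1 : ℕ)) * Real.Gamma (a - (i + 1 : ℕ)) :=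
      gsf_rec hA0 (by push_cast; ring)
    have hB' : Real.Gamma (b - i) = (b - (i + 1 : ℕ)) * Real.Gamma (b - (i + 1 : ℕ)) :=
      gsf_rec hB0 (by push_cast; ring)
    have e1 : a + b - (i : ℝ) - m - 2 = a + b - (i + 1 : ℕ) - m - 1 := by push_cast; ring
    have e2 : a + b - (i : ℝ) - 1 = a + b - (i + 1 : ℕ) := by push_cast; ring
    have e3 : b - (i : ℝ) - 1 = b - (i + 1 : ℕ) := by push_cast; ring
    have hc : (((i + 1 : ℕ) : ℝ)) * (Nat.choose m (i + 1) : ℝ)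
        = (m + 1 - (i + 1 : ℕ)) * (Nat.choose m i : ℝ) := by
      rcases Nat.lt_or_ge m i with h | h
      · omega
      · have := Nat.choose_succ_right_eq m i
        have h' := congrArg (Nat.cast : ℕ → ℝ) this
        push_cast [Nat.cast_sub h] at h' ⊢
        linarith
    simp only [gsfT, gsfG, hD', hA', hB', e1, e2, e3, hD, hE, Nat.choose_succ_succ' m i,
      Nat.cast_add (Nat.choose m i)]
    generalize Real.Gamma (a + b - (i + 1 : ℕ) - m - 2) = D at *
    generalize Real.Gamma (a + b - (i + 1 : ℕ) - 1) = E at *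
    generalize Real.Gamma (b - (i + 1 : ℕ)) = B at *
    generalize Real.Gamma (a - (i + 1 : ℕ)) = A at *
    generalize (Nat.choose m i : ℝ) = p at *
    generalize (Nat.choose m (i + 1) : ℝ) = q at *
    generalize ((i + 1 : ℕ) : ℝ) = J at *
    generalize (m : ℝ) = M at *
    have hE2 := hE0.ne'
    have hB2 := hB0.ne'
    have key : (a - M - 1) * (p + q) * (a + b - 2 * J - 1)
        - q * (a + b - 2 * J - 1) * (a + b - J - M - 2)
        = -(q * (b - J - 1) * (a + b - J - 1)) + p * (a - J) * (a + b - J - M - 2) := by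
      linear_combination (b - J - 1) * hc
    have l1 : (a - M - 1) * ((p + q) * (a + b - 2 * J - 1) * A * D / (B * ((a + b - J - 1) * E)))
        - q * (a + b - 2 * J - 1) * A * ((a + b - J - M - 2) * D) / (B * ((a + b - J - 1) * E))
        = ((a - M - 1) * (p + q) * (a + b - 2 * J - 1)
        - q * (a + b - 2 * J - 1) * (a + b - J - M - 2)) * (A * D / (B * ((a + b - J - 1) * E))) := by
      ring
    rw [l1, key]
    field_simp
    ring

lemma gsf_main (a b : ℝ) (m : ℕ) (h1 : (m : ℝ) < a)
    (h2 : (m : ℝ) < b) (h3 : 0 < a + b - 2 * m - 1) :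
    ∑ j ∈ Finset.range (m + 1), gsfT a b m j = Real.Gamma (a - m) / Real.Gamma b := by
  induction m with
  | zero =>
    simp only [Nat.cast_zero, mul_zero, sub_zero] at h1 h2 h3
    have hE : Real.Gamma (a + b) = (a + b - 1) * Real.Gamma (a + b - 1) :=
      gsf_rec h3 (by ring)
    have := (Real.Gamma_pos_of_pos h3).ne'
    have := (Real.Gamma_pos_of_pos h2).ne'
    have := h3.ne'
    simp [gsfT, hE]
    field_simp
  | succ m ih =>
    push_cast at h1 h2 h3
    have ih := ih (by linarith) (by linarith) (by linarith)
    have hs : ∑ j ∈ Finset.range (m + 2), ((a - m - 1) * gsfT a b (m + 1) j - gsfT a b m j)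
        = ∑ j ∈ Finset.range (m + 2), (gsfG a b m (j + 1) - gsfG a b m j) :=
      Finset.sum_congr rfl fun j hj => gsf_step a b m j
        (by have := Finset.mem_range.1 hj; omega) h1 h2 h3
    have hl : gsfT a b m (m + 1) = 0 := by simp [gsfT]
    have hg : gsfG a b m (m + 2) = 0 := by simp [gsfG]
    have hg0 : gsfG a b m 0 = 0 := rfl
    rw [Finset.sum_range_sub, Finset.sum_sub_distrib, ← Finset.mul_sum,
      Finset.sum_range_succ (gsfT a b m), ih, hl, hg, hg0] at hs
    have hx : 0 < a - m - 1 := by linarith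
    have hA : Real.Gamma (a - m) = (a - m - 1) * Real.Gamma (a - m - 1) :=
      gsf_rec hx (by ring)
    have e : a - ((m + 1 : ℕ) : ℝ) = a - m - 1 := by push_cast; ring
    rw [e]
    apply mul_left_cancel₀ hx.ne'
    rw [hA] at hs
    linear_combination hs

/-- Zeilberger-type Gamma identity underlying the Alesker–Fourier transform of the
Minkowski tensors: for integers `0 ≤ m ≤ ⌊s/2⌋` and real `ν, k` with `(k+s)/2 > m`,
`(ν-k+s)/2 > m`, `ν/2 + s - 2m - 1 > 0`,
`∑_{j=0}^{m} C(m,j) (ν/2+s-2j-1) Γ((k+s)/2-j) Γ(ν/2+s-j-m-1) / (Γ((ν-k+s)/2-j) Γ(ν/2+s-j))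
  = Γ((k+s)/2-m)/Γ((ν-k+s)/2)`. -/
theorem gamma_sum_fourier (s m : ℕ) (hm : m ≤ s / 2) (ν k : ℝ)
    (h1 : (m : ℝ) < (k + s) / 2) (h2 : (m : ℝ) < (ν - k + s) / 2)
    (h3 : 0 < ν / 2 + s - 2 * m - 1) :
    ∑ j ∈ Finset.range (m + 1),
        (Nat.choose m j : ℝ) * (ν / 2 + s - 2 * j - 1) * Real.Gamma ((k + s) / 2 - j) *
          Real.Gamma (ν / 2 + s - j - m - 1) /
          (Real.Gamma ((ν - k + s) / 2 - j) * Real.Gamma (ν / 2 + s - j))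
      = Real.Gamma ((k + s) / 2 - m) / Real.Gamma ((ν - k + s) / 2) := by
  have h := gsf_main ((k + s) / 2) ((ν - k + s) / 2) m h1 h2 (by linarith)
  have e : (k + s) / 2 + (ν - k + s) / 2 = ν / 2 + s := by ring
  simp only [gsfT, e] at h
  exact h
end

section
/- Let a ≥ 0 be an integer and let s, k, l be real numbers with k ≥ 1, l ≥ 1 and s > 2a. Then Σ_{j=0}^{a} (−1)^j · binom(a,j) · Γ((s+k)/2 − j) · Γ(l/2) / Γ((s+k+l)/2 − j) = (−1)^a · Γ(l/2 + a) · Γ((s+k)/2 − a) / Γ((s+k+l)/2). -/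
theorem gamma_sum_aux (a : ℕ) : ∀ (x y : ℝ), (a : ℝ) < x → 0 < y →
    ∑ j ∈ Finset.range (a + 1),
        (Nat.choose a j : ℝ) * ((-1 : ℝ) ^ j * (Real.Gamma (x - j) *
          Real.Gamma y / Real.Gamma (x + y - j)))
      = (-1 : ℝ) ^ a * Real.Gamma (y + a) * Real.Gamma (x - a) / Real.Gamma (x + y) := by
  induction a with
  | zero => intro x y _ _; simp; ring
  | succ a ih =>
    intro x y hx hy
    push_cast at hx
    have ha : (0 : ℝ) ≤ a := Nat.cast_nonneg a
    have h := Finset.sum_choose_succ_mul (R := ℝ) (fun j _ => (-1 : ℝ) ^ j * (Real.Gamma (x - j) *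
          Real.Gamma y / Real.Gamma (x + y - j))) a
    rw [h, ih x y (by linarith) hy]
    have h2 := ih (x - 1) y (by linarith) hy
    have h3 : ∑ i ∈ Finset.range (a + 1), (Nat.choose a i : ℝ) * ((-1 : ℝ) ^ (i + 1) *
        (Real.Gamma (x - ((i + 1 : ℕ) : ℝ)) * Real.Gamma y /
          Real.Gamma (x + y - ((i + 1 : ℕ) : ℝ)))) =
        -((-1 : ℝ) ^ a * Real.Gamma (y + a) * Real.Gamma (x - 1 - a) /
          Real.Gamma (x - 1 + y)) := by
      rw [← h2, ← Finset.sum_neg_distrib]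
      refine Finset.sum_congr rfl fun i _ => ?_
      have e1 : x - ((i + 1 : ℕ) : ℝ) = x - 1 - i := by push_cast; ring
      have e2 : x + y - ((i + 1 : ℕ) : ℝ) = x - 1 + y - i := by push_cast; ring
      rw [e1, e2]; ring
    rw [h3]
    have g1 : Real.Gamma (x - a) = (x - 1 - a) * Real.Gamma (x - 1 - a) := by
      rw [← Real.Gamma_add_one (by linarith)]; congr 1; ring
    have g2 : Real.Gamma (x + y) = (x - 1 + y) * Real.Gamma (x - 1 + y) := by
      rw [← Real.Gamma_add_one (by linarith)]; congr 1; ring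
    have g3 : Real.Gamma (y + ((a + 1 : ℕ) : ℝ)) = (y + a) * Real.Gamma (y + a) := by
      rw [← Real.Gamma_add_one (by linarith)]; congr 1; push_cast; ring
    have g4 : x - ((a + 1 : ℕ) : ℝ) = x - 1 - a := by push_cast; ring
    rw [g1, g2, g3, g4]
    have n1 : Real.Gamma (x - 1 + y) ≠ 0 := (Real.Gamma_pos_of_pos (by linarith)).ne'
    have n2 : x - 1 + y ≠ 0 := by linarith
    field_simp
    ring

/-- Gamma identity from the proof of the Crofton formula for tensor valuations: for an
integer `a ≥ 0` and reals `k ≥ 1`, `l ≥ 1`, `s > 2a`,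
`∑_{j=0}^{a} (-1)^j C(a,j) Γ((s+k)/2-j) Γ(l/2) / Γ((s+k+l)/2-j)
  = (-1)^a Γ(l/2+a) Γ((s+k)/2-a) / Γ((s+k+l)/2)`. -/
theorem gamma_sum_crofton (a : ℕ) (s k l : ℝ) (hk : 1 ≤ k) (hl : 1 ≤ l)
    (hs : 2 * (a : ℝ) < s) :
    ∑ j ∈ Finset.range (a + 1),
        (-1 : ℝ) ^ j * (Nat.choose a j : ℝ) * Real.Gamma ((s + k) / 2 - j) *
          Real.Gamma (l / 2) / Real.Gamma ((s + k + l) / 2 - j)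
      = (-1 : ℝ) ^ a * Real.Gamma (l / 2 + a) * Real.Gamma ((s + k) / 2 - a) /
          Real.Gamma ((s + k + l) / 2) := by
  have h := gamma_sum_aux a ((s + k) / 2) (l / 2) (by linarith) (by linarith)
  have e : (s + k) / 2 + l / 2 = (s + k + l) / 2 := by ring
  rw [e] at h
  rw [← h]
  refine Finset.sum_congr rfl fun j _ => ?_
  ring
end
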